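/- arXiv:0802.4186 — 4 statements merged into one kernel-verified Lean document; each statement's English description precedes it below -/
import Mathlib

section
/- Let K ⊆ L be a commutative field extension in which every element of L that is algebraic over K is separable over K, and let r, s be positive integers with r, s ≤ dim_K L. Then the minimum of dim_K⟨AB⟩, taken over all K-subspaces A, B of L with dim_K A = r and dim_K B = s, equals the minimum of (⌈r/h⌉ + ⌈s/h⌉ − 1)·h, taken over all h = [H:K] where H ranges over the finite-dimensional intermediate fields K ⊆ H ⊆ L. -/
/-!
The lower bound rests on a linear version of Kneser's theorem: if `H` is the stabilizer of `AB`,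
then `dim A + dim B ≤ dim AB + dim H`; applied to `HA` and `HB`, whose dimensions are multiples of
`h = dim H`, it gives `dim AB ≥ (⌈r/h⌉ + ⌈s/h⌉ - 1) h`.

To prove it, Dyson transforms place, for every nonzero `a ∈ A`, a subspace `V` with
`aB ⊆ V ⊆ AB` and `dim A + dim B ≤ dim V + dim (stabilizer V)`. The sets of `a` served by a given
stabilizer lie in subspaces that cover `A`. If the stabilizers are fewer than the elements of `K`,
one of these subspaces is all of `A`, and its field stabilizes `AB`. One may assume that `L` is
finitely generated over `K`. Then `K` has finite algebraic closure in `L`, so for infinite `K`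
separability leaves only finitely many candidates; for finite `K`, a constant extension of large
prime degree supplies enough scalars.

For the upper bound, take `A` and `B` inside the `H`-spans of `1, x, …, x ^ (⌈r/h⌉ - 1)` and
`1, x, …, x ^ (⌈s/h⌉ - 1)`, where `x` is transcendental or generates a large separable extension
of `H`.
-/

namespace LinearKneser

open Module Pointwise

theorem exists_eq_top_of_card_lt {K V ι : Type*} [DivisionRing K] [AddCommGroup V] [Module K V]
    [Nontrivial V] (p : ι → Submodule K V) (hcard : ENat.card ι < ENat.card K)
    (hcover : ∀ v ≠ 0, ∃ i, v ∈ p i) : ∃ i, p i = ⊤ := by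
  have : Finite ι := ENat.card_lt_top.1 (hcard.trans_le le_top)
  have := Fintype.ofFinite ι
  obtain ⟨v, hv⟩ := exists_ne (0 : V)
  have hunion : ⋃ i ∈ Finset.univ, (0 : V) +ᵥ ((p i).toAddSubgroup : Set V) = Set.univ := by
    refine Set.eq_univ_of_forall fun w => ?_
    rcases eq_or_ne w 0 with rfl | hw
    · obtain ⟨i, -⟩ := hcover v hv
      simpa using ⟨i⟩
    · simpa using hcover w hw
  -- B. H. Neumann: some member of a finite cover by cosets has index at most the size of the cover.
  obtain ⟨i, -, hfin, hle⟩ := AddSubgroup.exists_index_le_card_of_leftCoset_cover hunion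
  refine ⟨i, by_contra fun hi => hcard.not_ge ?_⟩
  have := Submodule.Quotient.nontrivial_iff.2 hi
  have : Finite (V ⧸ p i) := AddSubgroup.finite_quotient_of_finiteIndex
  obtain ⟨w, hw⟩ := exists_ne (0 : V ⧸ p i)
  calc ENat.card K ≤ ENat.card (V ⧸ p i) :=
        ENat.card_le_card_of_injective (smul_left_injective K hw)
    _ = Nat.card (V ⧸ p i) := ENat.card_eq_coe_natCard _
    _ ≤ Nat.card ι := by exact_mod_cast hle.trans_eq (Nat.card_eq_fintype_card (α := ι)).symm
    _ = ENat.card ι := (ENat.card_eq_coe_natCard _).symm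

section Kneser

variable {K L : Type*} [Field K] [Field L] [Algebra K L]

instance finiteDimensional_mul (A B : Submodule K L) [FiniteDimensional K A]
    [FiniteDimensional K B] : FiniteDimensional K ↥(A * B) :=
  Module.Finite.iff_fg.2 ((Module.Finite.iff_fg.1 ‹_›).mul (Module.Finite.iff_fg.1 ‹_›))

instance finiteDimensional_smul (a : L) (V : Submodule K L) [FiniteDimensional K V] :
    FiniteDimensional K ↥(a • V) :=
  Submodule.span_singleton_mul (R := K) (x := a) (p := V) ▸ inferInstance

theorem finrank_smul {a : L} (ha : a ≠ 0) (V : Submodule K L) :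
    finrank K ↥(a • V) = finrank K V :=
  (Submodule.equivMapOfInjective (DistribSMul.toLinearMap K L a)
    (mul_right_injective₀ ha) V).finrank_eq.symm

/-- The stabilizer `{x | x V ⊆ V}` of a finite-dimensional subspace `V`. It is a field because
an injective endomorphism of `V` is surjective; it is all of `L` when `V = ⊥`. -/
def stabilizer (V : Submodule K L) [FiniteDimensional K V] : IntermediateField K L where
  carrier := {x | ∀ v ∈ V, x * v ∈ V}
  mul_mem' hx hy v hv := by rw [mul_assoc]; exact hx _ (hy v hv)
  add_mem' hx hy v hv := by rw [add_mul]; exact V.add_mem (hx v hv) (hy v hv)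
  algebraMap_mem' c v hv := by rw [← Algebra.smul_def]; exact V.smul_mem c hv
  inv_mem' x hx v hv := by
    rcases eq_or_ne x 0 with rfl | hx0
    · simp
    have hxV : x • V = V := Submodule.eq_of_le_of_finrank_eq
      (by rintro _ ⟨w, hw, rfl⟩; exact hx w hw) (finrank_smul hx0 V)
    obtain ⟨w, hw, rfl⟩ : v ∈ x • V := hxV.symm ▸ hv
    simpa [hx0] using hw

theorem le_stabilizer_iff_mul_le {V : Submodule K L} [FiniteDimensional K V]
    {H : IntermediateField K L} :
    H ≤ stabilizer V ↔ Subalgebra.toSubmodule H.toSubalgebra * V ≤ V :=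
  (Submodule.mul_le (M := Subalgebra.toSubmodule H.toSubalgebra)).symm

theorem stabilizer_le_stabilizer_smul (a : L) (V : Submodule K L) [FiniteDimensional K V] :
    stabilizer V ≤ stabilizer (a • V) := by
  rintro x hx _ ⟨v, hv, rfl⟩
  exact ⟨x * v, hx v hv, mul_left_comm a x v⟩

section

variable {V : Submodule K L} [FiniteDimensional K V]

theorem exists_injective_linearMap_stabilizer (hV : V ≠ ⊥) :
    ∃ f : stabilizer V →ₗ[K] V, Function.Injective f := by
  obtain ⟨v, hv, hv0⟩ := Submodule.exists_mem_ne_zero_of_ne_bot hV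
  let f := LinearMap.mulRight K v ∘ₗ (stabilizer V).val.toLinearMap
  exact ⟨f.codRestrict V fun x => x.2 v hv, fun x y h =>
    Subtype.ext (mul_left_injective₀ hv0 (congrArg Subtype.val h))⟩

theorem finiteDimensional_stabilizer (hV : V ≠ ⊥) : FiniteDimensional K (stabilizer V) :=
  let ⟨f, hf⟩ := exists_injective_linearMap_stabilizer hV
  .of_injective f hf

theorem finrank_stabilizer_le (hV : V ≠ ⊥) : finrank K (stabilizer V) ≤ finrank K V :=
  let ⟨_, hf⟩ := exists_injective_linearMap_stabilizer hV
  LinearMap.finrank_le_finrank_of_injective hf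

theorem finrank_dvd_finrank_of_le_stabilizer {H : IntermediateField K L}
    (hH : H ≤ stabilizer V) : finrank K H ∣ finrank K V := by
  let W : Submodule H L := { V with smul_mem' := fun x v hv => hH x.2 v hv }
  exact ⟨finrank H W, (Module.finrank_mul_finrank K H W).symm⟩

end

theorem dyson_inter_mul_sup_le {e : L} (he : e ≠ 0) (A B : Submodule K L) :
    (A ⊓ e⁻¹ • B) * (B ⊔ e • A) ≤ A * B := by
  rw [Submodule.mul_sup]
  refine sup_le (mul_le_mul_left inf_le_left B) ?_
  calc (A ⊓ e⁻¹ • B) * e • A ≤ e⁻¹ • B * e • A := mul_le_mul_left inf_le_right _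
    _ = A * B := by rw [smul_mul_smul_comm, inv_mul_cancel₀ he, one_smul, mul_comm]

theorem finrank_dyson_inter_add_finrank_sup {e : L} (he : e ≠ 0) (A B : Submodule K L)
    [FiniteDimensional K A] [FiniteDimensional K B] :
    finrank K ↥(A ⊓ e⁻¹ • B) + finrank K ↥(B ⊔ e • A) = finrank K A + finrank K B := by
  have hinf : e • (A ⊓ e⁻¹ • B) = B ⊓ e • A := by
    refine le_antisymm ?_ ?_
    · rintro _ ⟨x, ⟨hxA, y, hy, rfl⟩, rfl⟩
      exact ⟨by simpa [he] using hy, Submodule.smul_mem_pointwise_smul _ _ _ hxA⟩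
    · rintro _ ⟨hxB, x, hxA, rfl⟩
      exact ⟨x, ⟨hxA, _, hxB, by simp [he]⟩, rfl⟩
  rw [← finrank_smul he, hinf, add_comm, Submodule.finrank_sup_add_finrank_inf_eq, finrank_smul he,
    add_comm]

theorem smul_ne_bot {a : L} (ha : a ≠ 0) {V : Submodule K L} (hV : V ≠ ⊥) : a • V ≠ ⊥ := by
  rw [← Submodule.span_singleton_mul]
  exact mul_ne_zero (mt Submodule.span_singleton_eq_bot.1 ha) hV

theorem exists_le_mul_of_one_mem (A B : Submodule K L) [FiniteDimensional K A]
    [FiniteDimensional K B] (hA : 1 ∈ A) (hB : B ≠ ⊥) :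
    ∃ (V : Submodule K L) (_ : FiniteDimensional K V), B ≤ V ∧ V ≤ A * B ∧
      finrank K A + finrank K B ≤ finrank K V + finrank K (stabilizer V) := by
  induction hn : finrank K A using Nat.strong_induction_on generalizing A B with
  | h n ih
  by_cases hAB : A * B ≤ B
  · have := finiteDimensional_stabilizer hB
    have hAstab : A ≤ Subalgebra.toSubmodule (stabilizer B).toSubalgebra := Submodule.mul_le.1 hAB
    have hle : finrank K A ≤ finrank K (stabilizer B) := Submodule.finrank_mono hAstab
    exact ⟨B, ‹_›, le_rfl, by simpa using mul_le_mul_left (Submodule.one_le.2 hA) B, by omega⟩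
  -- The Dyson transform at `e` shrinks `A`, keeps `dim A + dim B`, and stays inside `A * B`.
  obtain ⟨a, ha, e, he, hae⟩ : ∃ a ∈ A, ∃ e ∈ B, a * e ∉ B := by
    simpa [Submodule.mul_le] using hAB
  have he0 : e ≠ 0 := by rintro rfl; simp at hae
  have hlt : A ⊓ e⁻¹ • B < A := by
    refine lt_of_le_of_ne inf_le_left fun h => hae ?_
    obtain ⟨b, hb, hba⟩ := (h.ge ha).2
    simpa [← hba, he0, mul_comm] using hb
  obtain ⟨V, hVfin, hBV, hVAB, hV⟩ := ih _ (hn ▸ Submodule.finrank_lt_finrank_of_lt hlt)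
    (A ⊓ e⁻¹ • B) (B ⊔ e • A) ⟨hA, e, he, inv_mul_cancel₀ he0⟩
    (ne_bot_of_le_ne_bot hB le_sup_left) rfl
  refine ⟨V, hVfin, le_sup_left.trans hBV, hVAB.trans (dyson_inter_mul_sup_le he0 A B), ?_⟩
  rwa [finrank_dyson_inter_add_finrank_sup he0, hn] at hV

theorem exists_smul_le_le_mul {A B : Submodule K L} [FiniteDimensional K A]
    [FiniteDimensional K B] (hB : B ≠ ⊥) {a : L} (ha : a ∈ A) (ha0 : a ≠ 0) :
    ∃ (V : Submodule K L) (_ : FiniteDimensional K V), a • B ≤ V ∧ V ≤ A * B ∧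
      finrank K A + finrank K B ≤ finrank K V + finrank K (stabilizer V) := by
  obtain ⟨V, hVfin, hBV, hVAB, hV⟩ :=
    exists_le_mul_of_one_mem (a⁻¹ • A) B ⟨a, ha, inv_mul_cancel₀ ha0⟩ hB
  have := finiteDimensional_stabilizer (smul_ne_bot ha0 (ne_bot_of_le_ne_bot hB hBV))
  have hstab := IntermediateField.finrank_le_of_le_right (stabilizer_le_stabilizer_smul a V)
  refine ⟨a • V, inferInstance, smul_mono_right a hBV, ?_, ?_⟩
  · exact (smul_mono_right a hVAB).trans_eq (by rw [← smul_mul_assoc, smul_inv_smul₀ ha0])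
  · rw [finrank_smul (inv_ne_zero ha0)] at hV
    rw [finrank_smul ha0]
    omega

theorem finrank_add_finrank_le_of_encard_lt (A B : Submodule K L) [FiniteDimensional K A]
    [FiniteDimensional K B] (hA : A ≠ ⊥) (hB : B ≠ ⊥)
    (hcard : {H : IntermediateField K L |
      FiniteDimensional K H ∧ finrank K H ≤ finrank K ↥(A * B)}.encard < ENat.card K) :
    finrank K A + finrank K B ≤ finrank K ↥(A * B) + finrank K (stabilizer (A * B)) := by
  have hAB : A * B ≠ ⊥ := mul_ne_zero hA hB
  let S : Set (IntermediateField K L) :=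
    {H | (FiniteDimensional K H ∧ finrank K H ≤ finrank K ↥(A * B)) ∧
      finrank K A + finrank K B ≤ finrank K ↥(A * B) + finrank K H}
  let p (H : S) : Submodule K A :=
    ((A * B) / (B * Subalgebra.toSubmodule H.1.toSubalgebra)).comap A.subtype
  have := A.nontrivial_iff_ne_bot.2 hA
  obtain ⟨⟨H, hH⟩, hp⟩ : ∃ H, p H = ⊤ := by
    refine exists_eq_top_of_card_lt p ((Set.encard_le_encard fun H hH => hH.1).trans_lt hcard) ?_
    rintro ⟨a, ha⟩ ha0
    obtain ⟨V, hVfin, haB, hVAB, hV⟩ := exists_smul_le_le_mul hB ha (by simpa using ha0)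
    have hV0 : V ≠ ⊥ := ne_bot_of_le_ne_bot (smul_ne_bot (by simpa using ha0) hB) haB
    have hVle := Submodule.finrank_mono hVAB
    refine ⟨⟨stabilizer V, ⟨finiteDimensional_stabilizer hV0,
      (finrank_stabilizer_le hV0).trans hVle⟩, hV.trans (by gcongr)⟩, ?_⟩
    refine Submodule.mem_div_iff_forall_mul_mem.2 fun y hy => hVAB ?_
    have haBV : a • (B * Subalgebra.toSubmodule (stabilizer V).toSubalgebra) ≤ V := by
      rw [← smul_mul_assoc, mul_comm]
      exact (mul_le_mul_right haB _).trans (le_stabilizer_iff_mul_le.1 le_rfl)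
    exact haBV (Submodule.smul_mem_pointwise_smul y a _ hy)
  have hHAB : H ≤ stabilizer (A * B) := by
    rw [le_stabilizer_iff_mul_le, mul_comm, mul_assoc, Submodule.mul_le]
    exact fun a ha =>
      Submodule.mem_div_iff_forall_mul_mem.1 (hp.ge (Submodule.mem_top (x := ⟨a, ha⟩)))
  have := finiteDimensional_stabilizer hAB
  exact hH.2.trans (Nat.add_le_add_left (IntermediateField.finrank_le_of_le_right hHAB) _)

end Kneser

section ScalarExtension

variable {K L Ω : Type*} [Field K] [Field L] [Field Ω] [Algebra K L] [Algebra K Ω] [Algebra L Ω]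
  [IsScalarTower K L Ω] (K' : IntermediateField K Ω)

/-- The `K'`-span `K'C` in `Ω` of a `K`-subspace `C` of `L`. When `K'` and `L` are linearly
disjoint over `K` this is a copy of `K' ⊗[K] C`. -/
def scalarExtension (C : Submodule K L) : Submodule K' Ω :=
  Submodule.span K' (algebraMap L Ω '' C)

theorem scalarExtension_span (s : Set L) :
    scalarExtension K' (Submodule.span K s) = Submodule.span K' (algebraMap L Ω '' s) := by
  have hmap : algebraMap L Ω '' (Submodule.span K s : Set L) =
      Submodule.span K (algebraMap L Ω '' s) := by
    simpa using congrArg SetLike.coe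
      (Submodule.map_span (IsScalarTower.toAlgHom K L Ω).toLinearMap s)
  rw [scalarExtension, hmap, Submodule.span_span_of_tower]

theorem scalarExtension_mul (A B : Submodule K L) :
    scalarExtension K' (A * B) = scalarExtension K' A * scalarExtension K' B := by
  rw [scalarExtension.eq_def K' A, scalarExtension.eq_def K' B, Submodule.span_mul_span,
    ← Set.image_mul, ← scalarExtension_span, ← Submodule.span_mul_span, Submodule.span_eq,
    Submodule.span_eq]

instance finiteDimensional_scalarExtension (C : Submodule K L) [FiniteDimensional K C] :
    FiniteDimensional K' (scalarExtension K' C) := by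
  obtain ⟨s, rfl⟩ := Module.Finite.iff_fg.1 ‹FiniteDimensional K C›
  rw [scalarExtension_span]
  exact FiniteDimensional.span_of_finite K' (s.finite_toSet.image _)

variable {K'}

theorem finrank_scalarExtension (hd : K'.LinearDisjoint L) (C : Submodule K L)
    [FiniteDimensional K C] : finrank K' (scalarExtension K' C) = finrank K C := by
  let b := Module.finBasis K C
  have hspan : Submodule.span K (Set.range fun i => (b i : L)) = C := by
    simpa [Set.range_comp'] using (Submodule.map_span C.subtype (Set.range b)).symm
  have hb : LinearIndependent K' fun i => algebraMap L Ω (b i) :=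
    hd.linearIndependent_right' (b.linearIndependent.map' C.subtype (Submodule.ker_subtype C))
  rw [← hspan, scalarExtension_span, ← Set.range_comp', finrank_span_eq_card hb, hspan,
    Fintype.card_fin]

theorem exists_sum_eq_of_mem_scalarExtension {ι : Type*} [Fintype ι] (b : Basis ι K K')
    {C : Submodule K L} {x : Ω} (hx : x ∈ scalarExtension K' C) :
    ∃ c : ι → L, (∀ i, c i ∈ C) ∧ x = ∑ i, algebraMap L Ω (c i) * b i := by
  induction hx using Submodule.closure_induction with
  | zero => exact ⟨0, fun _ => C.zero_mem, by simp⟩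
  | add x y _ _ hx hy =>
    obtain ⟨c, hc, rfl⟩ := hx
    obtain ⟨d, hd, rfl⟩ := hy
    exact ⟨c + d, fun i => C.add_mem (hc i) (hd i), by simp [add_mul, Finset.sum_add_distrib]⟩
  | smul_mem k x hx =>
    obtain ⟨c, hc, rfl⟩ := hx
    refine ⟨fun i => b.repr k i • c, fun i => C.smul_mem _ hc, ?_⟩
    calc k • algebraMap L Ω c = (∑ i, b.repr k i • b i) • algebraMap L Ω c := by rw [b.sum_repr]
      _ = ∑ i, b.repr k i • (b i • algebraMap L Ω c) := by
        simp only [Finset.sum_smul, smul_assoc]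
      _ = ∑ i, algebraMap L Ω (b.repr k i • c) * b i := by
        refine Finset.sum_congr rfl fun i _ => ?_
        rw [← IsScalarTower.coe_toAlgHom' K L Ω, map_smul, smul_mul_assoc, mul_comm]
        rfl

theorem mem_of_sum_mem_scalarExtension (hd : K'.LinearDisjoint L) {ι : Type*} [Fintype ι]
    (b : Basis ι K K') {C : Submodule K L} {c : ι → L}
    (hc : ∑ i, algebraMap L Ω (c i) * b i ∈ scalarExtension K' C) (i : ι) : c i ∈ C := by
  obtain ⟨d, hdC, h⟩ := exists_sum_eq_of_mem_scalarExtension b hc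
  have hb : LinearIndependent L fun i => (b i : Ω) := hd.linearIndependent_left b.linearIndependent
  simp only [← Algebra.smul_def] at h
  exact hb.eq_coords_of_eq h i ▸ hdC i

theorem stabilizer_scalarExtension_le [FiniteDimensional K K'] (hd : K'.LinearDisjoint L)
    {V : Submodule K L} [FiniteDimensional K V] (hV : V ≠ ⊥) :
    Subalgebra.toSubmodule (stabilizer (scalarExtension K' V)).toSubalgebra ≤
      scalarExtension K' (Subalgebra.toSubmodule (stabilizer V).toSubalgebra) := by
  intro u hu
  let b := Module.finBasis K K'
  have hmem {C : Submodule K L} {c : L} (hc : c ∈ C) : algebraMap L Ω c ∈ scalarExtension K' C :=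
    Submodule.subset_span ⟨c, hc, rfl⟩
  obtain ⟨v, hv, hv0⟩ := Submodule.exists_mem_ne_zero_of_ne_bot hV
  obtain ⟨c, -, hc⟩ := exists_sum_eq_of_mem_scalarExtension b (hu _ (hmem hv))
  have hu_eq : u = ∑ i, algebraMap L Ω (c i / v) * b i := by
    have hfv : algebraMap L Ω v ≠ 0 := by simpa using hv0
    simp only [map_div₀, div_mul_eq_mul_div, ← Finset.sum_div, ← hc, mul_div_cancel_right₀ u hfv]
  have hstab (i) : c i / v ∈ stabilizer V := fun w hw => by
    refine mem_of_sum_mem_scalarExtension hd b (c := fun i => c i / v * w) ?_ i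
    convert hu _ (hmem hw) using 1
    simp only [hu_eq, map_mul, Finset.sum_mul, mul_right_comm]
  rw [hu_eq]
  refine Submodule.sum_mem _ fun i _ => ?_
  rw [mul_comm]
  exact Submodule.smul_mem _ (b i) (hmem (hstab i))

theorem finrank_stabilizer_scalarExtension_le [FiniteDimensional K K'] (hd : K'.LinearDisjoint L)
    {V : Submodule K L} [FiniteDimensional K V] (hV : V ≠ ⊥) :
    finrank K' (stabilizer (scalarExtension K' V)) ≤ finrank K (stabilizer V) := by
  have := finiteDimensional_stabilizer hV
  have hH : FiniteDimensional K (Subalgebra.toSubmodule (stabilizer V).toSubalgebra) := this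
  exact (Submodule.finrank_mono (stabilizer_scalarExtension_le hd hV)).trans_eq
    (finrank_scalarExtension hd _)

end ScalarExtension

theorem linearDisjoint_adjoin {K L ι : Type*} [Field K] [Field L] [Algebra K L]
    {F : IntermediateField K L} {x : ι → L} (hx : AlgebraicIndependent F x) :
    F.toSubalgebra.LinearDisjoint (Algebra.adjoin K (Set.range x)) := by
  have hxK : AlgebraicIndependent K x := hx.restrictScalars (algebraMap K F).injective
  refine .of_basis_right _ _
    ((MvPolynomial.basisMonomials ι K).map hxK.aevalEquiv.toLinearEquiv) ?_
  suffices h : LinearIndependent F fun m =>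
      MvPolynomial.aeval x (MvPolynomial.monomial m (1 : F)) by
    convert! h using 2 with m
    simp [MvPolynomial.aeval_monomial]
  simpa [Function.comp_def] using (MvPolynomial.basisMonomials ι F).linearIndependent.map'
    (MvPolynomial.aeval x).toLinearMap (LinearMap.ker_eq_bot.2 hx)

theorem finiteDimensional_algebraicClosure (K L : Type*) [Field K] [Field L] [Algebra K L]
    [Algebra.EssFiniteType K L] : FiniteDimensional K (algebraicClosure K L) := by
  obtain ⟨s, hs⟩ := exists_finset_isTranscendenceBasis K L
  have hdisj := linearDisjoint_adjoin hs.1.algebraicClosure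
  rw [Subtype.range_coe] at hdisj
  let F := IntermediateField.adjoin K (s : Set L)
  have : Algebra.EssFiniteType F L := .of_comp K _ _
  have : Algebra.IsAlgebraic F L := by
    convert! hs.isAlgebraic_field <;> simp
  have : FiniteDimensional F L := Algebra.finite_of_essFiniteType_of_isAlgebraic
  let b := Basis.ofVectorSpace K (algebraicClosure K L)
  have hb : LinearIndependent (Algebra.adjoin K (s : Set L)) fun i => (b i : L) :=
    hdisj.linearIndependent_left_of_flat b.linearIndependent
  open IntermediateField.algebraAdjoinAdjoin in
  have hbF : LinearIndependent F fun i => (b i : L) :=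
    hb.localization F (nonZeroDivisors (Algebra.adjoin K (s : Set L)))
  have := hbF.finite_of_isNoetherian
  exact .of_basis b

section Galois

open Polynomial

theorem mem_lifts_of_dvd_map_of_splits {F E : Type*} [Field F] [Field E] (i : F →+* E) {p : F[X]}
    (hp : p.Splits) (hp0 : p ≠ 0) {q : E[X]} (hq : q.Monic) (hqp : q ∣ p.map i) :
    q ∈ lifts i := by
  have hpi0 : p.map i ≠ 0 := Polynomial.map_ne_zero hp0
  refine ((hp.map i).of_dvd hpi0 hqp).mem_lift_of_roots_mem_range hq i fun a ha => ?_
  have ha' : a ∈ p.roots.map i := by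
    rw [← hp.roots_map_of_injective i.injective]
    exact Multiset.mem_of_le (Polynomial.roots.le_of_dvd hpi0 hqp) ha
  obtain ⟨b, -, rfl⟩ := Multiset.mem_map.1 ha'
  exact ⟨b, rfl⟩

variable {K L Ω : Type*} [Field K] [Field L] [Field Ω] [Algebra K L] [Algebra K Ω] [Algebra L Ω]
  [IsScalarTower K L Ω] {K' : IntermediateField K Ω}

theorem minpoly_eq_map_minpoly_of_normal [Normal K K']
    (hK' : ∀ x : L, algebraMap L Ω x ∈ K' → x ∈ (algebraMap K L).range) (θ : K') :
    minpoly L (θ : Ω) = (minpoly K θ).map (algebraMap K L) := by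
  have hθ : IsIntegral K θ := Normal.isIntegral ‹_› θ
  have hθΩ : IsIntegral K (θ : Ω) := hθ.map K'.val
  have hθL : IsIntegral L (θ : Ω) := hθΩ.tower_top
  have hmin : minpoly K (θ : Ω) = minpoly K θ := minpoly.algebraMap_eq Subtype.val_injective θ
  have hdvd : minpoly L (θ : Ω) ∣ (minpoly K θ).map (algebraMap K L) :=
    hmin ▸ minpoly.dvd_map_of_isScalarTower K L (θ : Ω)
  have hlift : (minpoly L (θ : Ω)).map (algebraMap L Ω) ∈ lifts (algebraMap K' Ω) := by
    refine mem_lifts_of_dvd_map_of_splits _ (Normal.splits ‹_› θ)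
      (Polynomial.map_ne_zero (minpoly.ne_zero hθ)) ((minpoly.monic hθL).map _) ?_
    simpa [Polynomial.map_map, ← IsScalarTower.algebraMap_eq] using
      Polynomial.map_dvd (algebraMap L Ω) hdvd
  have hliftK : minpoly L (θ : Ω) ∈ lifts (algebraMap K L) := by
    refine (lifts_iff_coeff_lifts _).2 fun n => hK' _ ?_
    obtain ⟨y, hy⟩ := (lifts_iff_coeff_lifts _).1 hlift n
    rw [← coeff_map, ← hy]
    exact y.2
  obtain ⟨q, hq, -, -⟩ := lifts_and_natDegree_eq_and_monic hliftK (minpoly.monic hθL)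
  have hqθ : aeval (θ : Ω) q = 0 := by
    rw [← aeval_map_algebraMap L, hq, minpoly.aeval]
  refine eq_of_monic_of_associated (minpoly.monic hθL) ((minpoly.monic hθ).map _)
    (associated_of_dvd_dvd hdvd ?_)
  rw [← hq, ← hmin]
  exact Polynomial.map_dvd _ (minpoly.dvd K _ hqθ)

theorem linearDisjoint_of_isGalois [FiniteDimensional K K'] [IsGalois K K']
    (hK' : ∀ x : L, algebraMap L Ω x ∈ K' → x ∈ (algebraMap K L).range) :
    K'.LinearDisjoint L := by
  let pb := Field.powerBasisOfFiniteOfSeparable K K'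
  have hdeg : pb.dim = (minpoly L (pb.gen : Ω)).natDegree := by
    rw [minpoly_eq_map_minpoly_of_normal hK', natDegree_map, pb.natDegree_minpoly]
  refine .of_basis_left pb.basis ?_
  convert (linearIndependent_pow (K := L) (pb.gen : Ω)).comp (Fin.cast hdeg) (Fin.cast_injective _)
  ext
  simp

theorem linearDisjoint_of_prime_finrank [FiniteDimensional K K'] [IsGalois K K']
    [FiniteDimensional K (algebraicClosure K L)] (hp : (finrank K K').Prime)
    (hlt : finrank K (algebraicClosure K L) < finrank K K') : K'.LinearDisjoint L := by
  refine linearDisjoint_of_isGalois fun x hx => minpoly.natDegree_eq_one_iff.1 ?_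
  have hx_min : minpoly K (⟨algebraMap L Ω x, hx⟩ : K') = minpoly K x := by
    rw [← minpoly.algebraMap_eq (algebraMap L Ω).injective x]
    exact (minpoly.algebraMap_eq (B' := Ω) Subtype.val_injective _).symm
  have hxK : IsIntegral K x := minpoly.ne_zero_iff.1 (hx_min ▸ minpoly.ne_zero (.of_finite K _))
  let y : algebraicClosure K L := ⟨x, hxK⟩
  have hy_min : minpoly K y = minpoly K x :=
    (minpoly.algebraMap_eq (B' := L) Subtype.val_injective y).symm
  have hdvd : (minpoly K x).natDegree ∣ finrank K K' :=
    hx_min ▸ minpoly.degree_dvd (.of_finite K _)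
  have hle : (minpoly K x).natDegree ≤ finrank K (algebraicClosure K L) :=
    hy_min ▸ minpoly.natDegree_le y
  exact (hp.eq_one_or_self_of_dvd _ hdvd).resolve_right (by omega)

end Galois

theorem exists_intermediateField_finrank_eq (K Ω : Type*) [Field K] [Field Ω] [Algebra K Ω]
    [Finite K] [IsAlgClosed Ω] (n : ℕ) [NeZero n] :
    ∃ F : IntermediateField K Ω, finrank K F = n := by
  obtain ⟨q, hq⟩ := CharP.exists K
  have : Fact q.Prime := ⟨CharP.char_is_prime K q⟩
  let f : FiniteField.Extension K q n →ₐ[K] Ω := IsAlgClosed.lift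
  exact ⟨f.fieldRange, (AlgEquiv.ofInjectiveField f).toLinearEquiv.finrank_eq.symm.trans
    (FiniteField.finrank_extension K q n)⟩

section FiniteBase

variable {K E : Type*} [Field K] [Field E] [Algebra K E] [Finite K]

theorem le_of_finrank_dvd_finrank {F₁ F₂ : IntermediateField K E} [FiniteDimensional K F₁]
    [FiniteDimensional K F₂] (h : finrank K F₁ ∣ finrank K F₂) : F₁ ≤ F₂ := by
  have : Finite F₁ := Module.finite_of_finite K
  have : Finite F₂ := Module.finite_of_finite K
  obtain ⟨f⟩ := FiniteField.nonempty_algHom_of_finrank_dvd h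
  rw [← (F₂.val.comp f).fieldRange_of_normal]
  rintro _ ⟨x, rfl⟩
  exact (f x).2

theorem encard_finrank_le_le (n : ℕ) :
    {F : IntermediateField K E | FiniteDimensional K F ∧ finrank K F ≤ n}.encard ≤ n := by
  refine (Set.encard_le_encard_of_injOn (t := (Finset.Icc 1 n : Set ℕ))
    (f := fun F : IntermediateField K E => finrank K F) ?_ ?_).trans ?_
  · rintro F ⟨_, hF⟩
    exact Finset.mem_coe.2 (Finset.mem_Icc.2 ⟨finrank_pos, hF⟩)
  · rintro F₁ ⟨_, -⟩ F₂ ⟨_, -⟩ h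
    exact le_antisymm (le_of_finrank_dvd_finrank h.dvd) (le_of_finrank_dvd_finrank h.symm.dvd)
  · rw [Set.encard_coe_eq_coe_finsetCard, Nat.card_Icc, Nat.add_sub_cancel]

end FiniteBase

theorem kneser_of_finite {K L : Type*} [Field K] [Field L] [Algebra K L] [Finite K]
    [Algebra.EssFiniteType K L] (A B : Submodule K L) [FiniteDimensional K A]
    [FiniteDimensional K B] (hA : A ≠ ⊥) (hB : B ≠ ⊥) :
    finrank K A + finrank K B ≤ finrank K ↥(A * B) + finrank K (stabilizer (A * B)) := by
  have := finiteDimensional_algebraicClosure K L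
  obtain ⟨p, hp_lt, hp⟩ := Nat.exists_infinite_primes
    (finrank K ↥(A * B) + finrank K (algebraicClosure K L) + 1)
  have : NeZero p := ⟨hp.ne_zero⟩
  obtain ⟨K', rfl⟩ := exists_intermediateField_finrank_eq K (AlgebraicClosure L) p
  have : FiniteDimensional K K' := .of_finrank_pos hp.pos
  have : Finite K' := Module.finite_of_finite K
  have hd : K'.LinearDisjoint L := linearDisjoint_of_prime_finrank hp (by omega)
  have hne {C : Submodule K L} [FiniteDimensional K C] (hC : C ≠ ⊥) : scalarExtension K' C ≠ ⊥ := by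
    rw [← Submodule.one_le_finrank_iff] at hC ⊢
    rwa [finrank_scalarExtension hd]
  have hcard : (finrank K ↥(A * B) : ℕ∞) < ENat.card K' := by
    rw [ENat.card_eq_coe_natCard, Module.natCard_eq_pow_finrank (K := K)]
    have := Nat.lt_pow_self (n := finrank K K') (Finite.one_lt_card (α := K))
    exact_mod_cast (by omega)
  have key := finrank_add_finrank_le_of_encard_lt (scalarExtension K' A) (scalarExtension K' B)
    (hne hA) (hne hB) (by
      rw [← scalarExtension_mul, finrank_scalarExtension hd]
      exact (encard_finrank_le_le _).trans_lt hcard)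
  have hstab : stabilizer (scalarExtension K' A * scalarExtension K' B) =
      stabilizer (scalarExtension K' (A * B)) := by
    simp only [scalarExtension_mul]
  rw [hstab, ← scalarExtension_mul] at key
  simp only [finrank_scalarExtension hd] at key
  exact key.trans (by gcongr; exact finrank_stabilizer_scalarExtension_le hd (mul_ne_zero hA hB))

section Descent

variable {K L : Type*} [Field K] [Field L] [Algebra K L]

theorem finite_finiteDimensional_intermediateField [Algebra.EssFiniteType K L]
    (hsep : ∀ x : L, IsAlgebraic K x → IsSeparable K x) :
    {F : IntermediateField K L | FiniteDimensional K F}.Finite := by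
  have := finiteDimensional_algebraicClosure K L
  have : Algebra.IsSeparable K (algebraicClosure K L) :=
    ⟨fun x => .of_algHom (algebraicClosure K L).val (hsep _ (mem_algebraicClosure_iff.1 x.2))⟩
  have : Finite (IntermediateField K (algebraicClosure K L)) :=
    Field.finite_intermediateField_of_exists_primitive_element K _
      (Field.exists_primitive_element K _)
  refine (Set.finite_range (IntermediateField.lift (F := algebraicClosure K L))).subset
    fun F (hF : FiniteDimensional K F) => ?_
  have hle : F ≤ algebraicClosure K L := le_algebraicClosure K L F
  exact ⟨IntermediateField.restrict hle, IntermediateField.lift_restrict hle⟩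

theorem kneser_of_infinite [Infinite K] [Algebra.EssFiniteType K L]
    (hsep : ∀ x : L, IsAlgebraic K x → IsSeparable K x) (A B : Submodule K L)
    [FiniteDimensional K A] [FiniteDimensional K B] (hA : A ≠ ⊥) (hB : B ≠ ⊥) :
    finrank K A + finrank K B ≤ finrank K ↥(A * B) + finrank K (stabilizer (A * B)) := by
  refine finrank_add_finrank_le_of_encard_lt A B hA hB ?_
  rw [ENat.card_eq_top_of_infinite]
  exact ((finite_finiteDimensional_intermediateField hsep).subset fun F hF => hF.1).encard_lt_top

theorem finrank_map_algHom {E : Type*} [Field E] [Algebra K E] (f : E →ₐ[K] L)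
    (V : Submodule K E) : finrank K (V.map f.toLinearMap) = finrank K V :=
  (Submodule.equivMapOfInjective f.toLinearMap f.injective V).finrank_eq.symm

theorem finrank_stabilizer_le_finrank_stabilizer_map {E : Type*} [Field E] [Algebra K E]
    (f : E →ₐ[K] L) {V : Submodule K E} [FiniteDimensional K V] (hV : V ≠ ⊥) :
    finrank K (stabilizer V) ≤ finrank K (stabilizer (V.map f.toLinearMap)) := by
  have := finiteDimensional_stabilizer (V := V.map f.toLinearMap) (by
    simpa using (Submodule.map_injective_of_injective (f := f.toLinearMap) f.injective).ne hV)
  have hle : (stabilizer V).map f ≤ stabilizer (V.map f.toLinearMap) := by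
    rintro _ ⟨x, hx, rfl⟩ _ ⟨v, hv, rfl⟩
    exact ⟨x * v, hx v hv, map_mul f x v⟩
  exact (((stabilizer V).equivMap f).toLinearEquiv.finrank_eq).trans_le
    (IntermediateField.finrank_le_of_le_right hle)

theorem exists_essFiniteType_map_eq (A B : Submodule K L) [FiniteDimensional K A]
    [FiniteDimensional K B] :
    ∃ (E : IntermediateField K L) (A' B' : Submodule K E), Algebra.EssFiniteType K E ∧
      A'.map E.val.toLinearMap = A ∧ B'.map E.val.toLinearMap = B := by
  obtain ⟨s, hs⟩ := Module.Finite.iff_fg.1 (inferInstance : FiniteDimensional K ↥(A ⊔ B))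
  let E := IntermediateField.adjoin K (s : Set L)
  have hle : A ⊔ B ≤ LinearMap.range E.val.toLinearMap := by
    rw [← hs, Submodule.span_le]
    exact fun x hx => ⟨⟨x, IntermediateField.subset_adjoin K _ hx⟩, rfl⟩
  exact ⟨E, A.comap E.val.toLinearMap, B.comap E.val.toLinearMap,
    IntermediateField.essFiniteType_iff.2 ⟨s, rfl⟩,
    Submodule.map_comap_eq_of_le (le_sup_left.trans hle),
    Submodule.map_comap_eq_of_le (le_sup_right.trans hle)⟩

theorem kneser (hsep : ∀ x : L, IsAlgebraic K x → IsSeparable K x) (A B : Submodule K L)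
    [FiniteDimensional K A] [FiniteDimensional K B] (hA : A ≠ ⊥) (hB : B ≠ ⊥) :
    finrank K A + finrank K B ≤ finrank K ↥(A * B) + finrank K (stabilizer (A * B)) := by
  obtain ⟨E, A, B, hE, rfl, rfl⟩ := exists_essFiniteType_map_eq A B
  let e (C : Submodule K E) :=
    (Submodule.equivMapOfInjective E.val.toLinearMap E.val.injective C).symm
  have : FiniteDimensional K A := .equiv (e A)
  have : FiniteDimensional K B := .equiv (e B)
  replace hA : A ≠ ⊥ := mt (by rintro rfl; exact Submodule.map_bot _) hA
  replace hB : B ≠ ⊥ := mt (by rintro rfl; exact Submodule.map_bot _) hB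
  have hsepE : ∀ x : E, IsAlgebraic K x → IsSeparable K x := fun x hx =>
    .of_algHom E.val (hsep _ (hx.algHom E.val))
  have key : finrank K A + finrank K B ≤ finrank K ↥(A * B) + finrank K (stabilizer (A * B)) := by
    cases finite_or_infinite K
    · exact kneser_of_finite A B hA hB
    · exact kneser_of_infinite hsepE A B hA hB
  have hmul : (A * B).map E.val.toLinearMap =
      A.map E.val.toLinearMap * B.map E.val.toLinearMap := Submodule.map_mul A B E.val
  have hstab : stabilizer (A.map E.val.toLinearMap * B.map E.val.toLinearMap) =
      stabilizer ((A * B).map E.val.toLinearMap) := by simp only [hmul]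
  rw [hstab, ← hmul, finrank_map_algHom, finrank_map_algHom, finrank_map_algHom]
  exact key.trans (Nat.add_le_add_left
    (finrank_stabilizer_le_finrank_stabilizer_map E.val (mul_ne_zero hA hB)) _)

end Descent

section LowerBound

variable {K L : Type*} [Field K] [Field L] [Algebra K L]

theorem ceilDiv_mul_finrank_le_finrank_mul (H : IntermediateField K L) [FiniteDimensional K H]
    (A : Submodule K L) [FiniteDimensional K A] :
    (finrank K A ⌈/⌉ finrank K H) * finrank K H ≤
      finrank K ↥(Subalgebra.toSubmodule H.toSubalgebra * A) := by
  have : FiniteDimensional K (Subalgebra.toSubmodule H.toSubalgebra) := ‹FiniteDimensional K H›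
  have hA : A ≤ Subalgebra.toSubmodule H.toSubalgebra * A := by
    simpa using mul_le_mul_left (Submodule.one_le.2 H.one_mem) A
  have hH : H ≤ stabilizer (Subalgebra.toSubmodule H.toSubalgebra * A) := by
    rw [le_stabilizer_iff_mul_le, ← mul_assoc, H.toSubalgebra.isIdempotentElem_toSubmodule]
  obtain ⟨m, hm⟩ := finrank_dvd_finrank_of_le_stabilizer hH
  have hle := Submodule.finrank_mono hA
  rw [hm] at hle ⊢
  rw [mul_comm]
  exact Nat.mul_le_mul_left _ ((ceilDiv_le_iff_le_mul finrank_pos).2 hle)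

theorem ceilDiv_finrank_stabilizer_le (hsep : ∀ x : L, IsAlgebraic K x → IsSeparable K x)
    (A B : Submodule K L) [FiniteDimensional K A] [FiniteDimensional K B]
    (hA : A ≠ ⊥) (hB : B ≠ ⊥) :
    (finrank K A ⌈/⌉ finrank K (stabilizer (A * B)) +
        finrank K B ⌈/⌉ finrank K (stabilizer (A * B)) - 1) * finrank K (stabilizer (A * B)) ≤
      finrank K ↥(A * B) := by
  let H := stabilizer (A * B)
  have : FiniteDimensional K H := finiteDimensional_stabilizer (mul_ne_zero hA hB)
  let S := Subalgebra.toSubmodule H.toSubalgebra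
  have : FiniteDimensional K S := ‹FiniteDimensional K H›
  have hS : (1 : Submodule K L) ≤ S := Submodule.one_le.2 H.one_mem
  have hS0 : S ≠ ⊥ := ne_bot_of_le_ne_bot one_ne_zero hS
  have hmul : S * A * (S * B) = A * B := by
    rw [mul_mul_mul_comm, H.toSubalgebra.isIdempotentElem_toSubmodule]
    exact le_antisymm (le_stabilizer_iff_mul_le.1 le_rfl) (le_mul_of_one_le_left' hS)
  have hkneser := kneser hsep (S * A) (S * B) (mul_ne_zero hS0 hA) (mul_ne_zero hS0 hB)
  have hstab : stabilizer (S * A * (S * B)) = H := by simp only [hmul, H]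
  rw [hstab, hmul] at hkneser
  have hceilA : (finrank K A ⌈/⌉ finrank K H) * finrank K H ≤ finrank K ↥(S * A) :=
    ceilDiv_mul_finrank_le_finrank_mul H A
  have hceilB : (finrank K B ⌈/⌉ finrank K H) * finrank K H ≤ finrank K ↥(S * B) :=
    ceilDiv_mul_finrank_le_finrank_mul H B
  change (finrank K A ⌈/⌉ finrank K H + finrank K B ⌈/⌉ finrank K H - 1) * finrank K H ≤ _
  rw [Nat.sub_mul, add_mul, one_mul]
  omega

end LowerBound

section UpperBound

variable {F L : Type*} [Field F] [Field L] [Algebra F L]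

/-- The span of the geometric progression `1, x, …, x ^ (n - 1)`. Pairs of such spaces attain the
Cauchy–Davenport bound `m + n - 1` for the dimension of a product. -/
def powerSpan (F : Type*) [Field F] [Algebra F L] (x : L) (n : ℕ) : Submodule F L :=
  Submodule.span F (Set.range fun i : Fin n => x ^ (i : ℕ))

instance (x : L) (n : ℕ) : FiniteDimensional F (powerSpan F x n) :=
  FiniteDimensional.span_of_finite F (Set.finite_range _)

theorem finrank_powerSpan_le (x : L) (n : ℕ) : finrank F (powerSpan F x n) ≤ n :=
  (finrank_range_le_card _).trans (Fintype.card_fin n).le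

theorem finrank_powerSpan {x : L} {N n : ℕ} (hn : n ≤ N)
    (hx : LinearIndependent F fun i : Fin N => x ^ (i : ℕ)) : finrank F (powerSpan F x n) = n :=
  (finrank_span_eq_card (hx.comp (Fin.castLE hn) (Fin.castLE_injective _))).trans
    (Fintype.card_fin n)

theorem powerSpan_mul_le (x : L) (m n : ℕ) :
    powerSpan F x m * powerSpan F x n ≤ powerSpan F x (m + n - 1) := by
  rw [powerSpan, powerSpan, Submodule.span_mul_span, Submodule.span_le]
  rintro _ ⟨_, ⟨i, rfl⟩, _, ⟨j, rfl⟩, rfl⟩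
  exact Submodule.subset_span ⟨⟨i + j, by omega⟩, pow_add x i j⟩

theorem linearIndependent_pow_of_transcendental {x : L} (hx : Transcendental F x) :
    LinearIndependent F fun i : ℕ => x ^ i := by
  simpa [Function.comp_def] using (Polynomial.basisMonomials F).linearIndependent.map'
    (Polynomial.aeval x).toLinearMap (LinearMap.ker_eq_bot.2 (transcendental_iff_injective.1 hx))

theorem exists_linearIndependent_pow_of_isSeparable [Algebra.IsSeparable F L] {n : ℕ}
    (hn : (n : Cardinal) ≤ Module.rank F L) :
    ∃ x : L, LinearIndependent F fun i : Fin n => x ^ (i : ℕ) := by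
  obtain ⟨v, hv⟩ := exists_linearIndependent_of_le_rank hn
  let E := IntermediateField.adjoin F (Set.range v)
  have : FiniteDimensional F E := IntermediateField.finiteDimensional_adjoin
    fun x _ => Algebra.IsIntegral.isIntegral x
  let w : Fin n → E := fun i => ⟨v i, IntermediateField.subset_adjoin F _ ⟨i, rfl⟩⟩
  have hw : LinearIndependent F w := .of_comp E.val.toLinearMap hv
  obtain ⟨y, hy⟩ := Field.exists_primitive_element F E
  rw [Field.primitive_element_iff_minpoly_natDegree_eq] at hy
  have hle : n ≤ (minpoly F y).natDegree := by
    simpa [hy] using hw.fintype_card_le_finrank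
  exact ⟨y, ((linearIndependent_pow y).comp (Fin.castLE hle) (Fin.castLE_injective _)).map'
    E.val.toLinearMap (LinearMap.ker_eq_bot.2 E.val.injective)⟩

theorem exists_linearIndependent_pow (hsep : ∀ x : L, IsAlgebraic F x → IsSeparable F x) {n : ℕ}
    (hn : (n : Cardinal) ≤ Module.rank F L) :
    ∃ x : L, LinearIndependent F fun i : Fin n => x ^ (i : ℕ) := by
  by_cases halg : Algebra.IsAlgebraic F L
  · have : Algebra.IsSeparable F L := ⟨fun x => hsep x (halg.isAlgebraic x)⟩
    exact exists_linearIndependent_pow_of_isSeparable hn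
  · obtain ⟨x, hx⟩ := (Algebra.transcendental_iff_not_isAlgebraic.2 halg).transcendental
    exact ⟨x, (linearIndependent_pow_of_transcendental hx).comp _ Fin.val_injective⟩

variable {K : Type*} [Field K] [Algebra K L]

theorem ceilDiv_finrank_le_rank (H : IntermediateField K L) [FiniteDimensional K H] {r : ℕ}
    (hr : (r : Cardinal) ≤ Module.rank K L) :
    ((r ⌈/⌉ finrank K H : ℕ) : Cardinal) ≤ Module.rank H L := by
  rcases lt_or_ge (Module.rank H L) Cardinal.aleph0 with hlt | hge
  · obtain ⟨m, hm⟩ := Cardinal.lt_aleph0.1 hlt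
    rw [← rank_mul_rank K H L, hm, ← finrank_eq_rank K H] at hr
    rw [hm]
    exact_mod_cast (ceilDiv_le_iff_le_mul finrank_pos).2 (by exact_mod_cast hr)
  · exact Cardinal.natCast_le_aleph0.trans hge

theorem exists_submodule_le_finrank_eq {V : Type*} [AddCommGroup V] [Module K V]
    {C : Submodule K V} {r : ℕ} (hr : r ≤ finrank K C) : ∃ A ≤ C, finrank K A = r := by
  obtain ⟨v, hv⟩ := exists_linearIndependent_of_le_finrank hr
  refine ⟨(Submodule.span K (Set.range v)).map C.subtype, Submodule.map_subtype_le C _, ?_⟩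
  rw [(Submodule.equivSubtypeMap C _).symm.finrank_eq, finrank_span_eq_card hv, Fintype.card_fin]

theorem finrank_restrictScalars {F V : Type*} [Field F] [Algebra K F] [AddCommGroup V]
    [Module K V] [Module F V] [IsScalarTower K F V] (S : Submodule F V) :
    finrank K (S.restrictScalars K) = finrank K F * finrank F S :=
  (finrank_mul_finrank K F S).symm

theorem exists_finrank_mul_le (hsep : ∀ x : L, IsAlgebraic K x → IsSeparable K x) {r s : ℕ}
    (hrL : (r : Cardinal) ≤ Module.rank K L) (hsL : (s : Cardinal) ≤ Module.rank K L)
    (H : IntermediateField K L) [FiniteDimensional K H] :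
    ∃ A B : Submodule K L, finrank K A = r ∧ finrank K B = s ∧
      finrank K ↥(A * B) ≤ (r ⌈/⌉ finrank K H + s ⌈/⌉ finrank K H - 1) * finrank K H := by
  set p := r ⌈/⌉ finrank K H with hp
  set q := s ⌈/⌉ finrank K H with hq
  have hsepH (x : L) (hx : IsAlgebraic H x) : IsSeparable H x :=
    (hsep x (hx.restrictScalars K)).tower_top H
  obtain ⟨x, hx⟩ := exists_linearIndependent_pow (n := max p q) hsepH (by
    rw [Nat.mono_cast.map_max]
    exact max_le (ceilDiv_finrank_le_rank H hrL) (ceilDiv_finrank_le_rank H hsL))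
  let P (n : ℕ) : Submodule K L := (powerSpan H x n).restrictScalars K
  have hP (n : ℕ) : finrank K (P n) = finrank K H * finrank H (powerSpan H x n) :=
    finrank_restrictScalars _
  have : FiniteDimensional K (P (p + q - 1)) :=
    Module.Finite.trans (R := K) H (powerSpan H x (p + q - 1))
  obtain ⟨A, hA, hAr⟩ := exists_submodule_le_finrank_eq (C := P p) (r := r) (by
    rw [hP, finrank_powerSpan (le_max_left p q) hx]
    exact (ceilDiv_le_iff_le_mul finrank_pos).1 hp.ge)
  obtain ⟨B, hB, hBs⟩ := exists_submodule_le_finrank_eq (C := P q) (r := s) (by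
    rw [hP, finrank_powerSpan (le_max_right p q) hx]
    exact (ceilDiv_le_iff_le_mul finrank_pos).1 hq.ge)
  have hAB : A * B ≤ P (p + q - 1) := Submodule.mul_le.2 fun a ha b hb =>
    powerSpan_mul_le x p q (Submodule.mul_mem_mul (hA ha) (hB hb))
  refine ⟨A, B, hAr, hBs, ?_⟩
  calc finrank K ↥(A * B) ≤ finrank K (P (p + q - 1)) := Submodule.finrank_mono hAB
    _ = finrank K H * finrank H (powerSpan H x (p + q - 1)) := hP _
    _ ≤ finrank K H * (p + q - 1) := Nat.mul_le_mul_left _ (finrank_powerSpan_le x _)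
    _ = (p + q - 1) * finrank K H := mul_comm _ _

end UpperBound

end LinearKneser

/-- **Theorem 1.1** (Eliahou–Kervaire–Lecouvey). For a separable field extension `K ⊆ L`
and positive integers `r, s ≤ dim_K L`, the minimum of `dim_K ⟨AB⟩` over `K`-subspaces
`A, B` of `L` with `dim_K A = r`, `dim_K B = s` equals
`κ_{K,L}(r,s) = min_h (⌈r/h⌉ + ⌈s/h⌉ - 1)·h`, where `h` ranges over the `K`-degrees of
finite-dimensional intermediate fields `K ⊆ H ⊆ L`. -/
theorem stmt_0 (K L : Type*) [Field K] [Field L] [Algebra K L]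
    (hsep : ∀ x : L, IsAlgebraic K x → IsSeparable K x)
    (r s : ℕ) (hr : 0 < r) (hs : 0 < s)
    (hrL : (r : Cardinal) ≤ Module.rank K L) (hsL : (s : Cardinal) ≤ Module.rank K L) :
    sInf {n : ℕ | ∃ A B : Submodule K L,
        Module.finrank K A = r ∧ Module.finrank K B = s ∧ Module.finrank K ↥(A * B) = n}
      = sInf {n : ℕ | ∃ H : IntermediateField K L, FiniteDimensional K H ∧
          n = (r ⌈/⌉ Module.finrank K ↥H + s ⌈/⌉ Module.finrank K ↥H - 1)
                * Module.finrank K ↥H} := by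
  refine le_antisymm ?upper ?lower
  case upper =>
    refine le_csInf ⟨_, ⊥, inferInstance, rfl⟩ ?_
    rintro _ ⟨H, hH, rfl⟩
    obtain ⟨A, B, hA, hB, hAB⟩ := LinearKneser.exists_finrank_mul_le hsep hrL hsL H
    refine le_trans (Nat.sInf_le ?_) hAB
    exact ⟨A, B, hA, hB, rfl⟩
  case lower =>
    obtain ⟨A₀, B₀, hA₀, hB₀, -⟩ := LinearKneser.exists_finrank_mul_le hsep hrL hsL ⊥
    refine le_csInf ⟨_, A₀, B₀, hA₀, hB₀, rfl⟩ ?_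
    rintro _ ⟨A, B, rfl, rfl, rfl⟩
    have := FiniteDimensional.of_finrank_pos hr
    have := FiniteDimensional.of_finrank_pos hs
    have hA : A ≠ ⊥ := by rintro rfl; simp at hr
    have hB : B ≠ ⊥ := by rintro rfl; simp at hs
    refine le_trans (Nat.sInf_le ?_) (LinearKneser.ceilDiv_finrank_stabilizer_le hsep A B hA hB)
    exact ⟨_, LinearKneser.finiteDimensional_stabilizer (mul_ne_zero hA hB), rfl⟩
end

section
/- Let K ⊆ L be a commutative field extension in which every element of L that is algebraic over K is separable over K, let r, s be positive integers with r, s ≤ dim_K L, and let H be a finite-dimensional intermediate field K ⊆ H ⊆ L with h = [H:K]. Then there exist K-subspaces A, B of L with dim_K A = r, dim_K B = s and dim_K⟨AB⟩ ≤ (⌈r/h⌉ + ⌈s/h⌉ − 1)·h. -/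
/-!
Call a sequence `e` in a `K`-algebra filtered if `e i * e j` lies in the span of
`e 0, …, e (i + j)`, as it does for the powers of an element. The spans `V n` of the first `n` terms
then satisfy `V p * V q ≤ V (p + q - 1)`, so a filtered sequence that starts with `max p q`
independent terms settles the case `H = K`, `p = r`, `q = s`.

If `L` contains a transcendental element, its powers form such a sequence. Otherwise it is enough to
find a filtered basis in every finitely generated subfield, by adjoining one element `a` at a time:
if `e 0, …, e (f - 1)` is a filtered basis of `F` over `K`, then the products `e j * a ^ i`, ordered
lexicographically with the exponent of `a` most significant, form one of `F(a)`.

For general `H`, apply this over `H` with `p = ⌈r/h⌉` and `q = ⌈s/h⌉`, and shrink `V p` and `V q` to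
`K`-subspaces of dimensions `r` and `s`.
-/

open Module Submodule

section InitialSpan

variable (R : Type*) {M : Type*} [Semiring R] [AddCommMonoid M] [Module R M]

/-- The submodule spanned by the first `n` terms `e 0, …, e (n - 1)` of a sequence. -/
def initialSpan (e : ℕ → M) (n : ℕ) : Submodule R M :=
  span R (Set.range fun i : Fin n => e i)

variable {R} {e : ℕ → M}

lemma mem_initialSpan {i n : ℕ} (h : i < n) : e i ∈ initialSpan R e n :=
  subset_span ⟨⟨i, h⟩, rfl⟩

lemma initialSpan_le_iff {n : ℕ} {S : Submodule R M} :
    initialSpan R e n ≤ S ↔ ∀ i < n, e i ∈ S := by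
  simp [initialSpan, span_le, Set.range_subset_iff, Fin.forall_iff]

lemma initialSpan_mono : Monotone (initialSpan R e) := fun _ _ h =>
  initialSpan_le_iff.2 fun _ hi => mem_initialSpan (hi.trans_le h)

lemma map_initialSpan {N : Type*} [AddCommMonoid N] [Module R N] (φ : M →ₗ[R] N) (n : ℕ) :
    (initialSpan R e n).map φ = initialSpan R (φ ∘ e) n := by
  rw [initialSpan, map_span, ← Set.range_comp]
  rfl

instance finite_initialSpan (e : ℕ → M) (n : ℕ) : Module.Finite R (initialSpan R e n) :=
  Module.Finite.span_of_finite R (Set.finite_range _)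

end InitialSpan

section Finrank

variable {R M : Type*} [Ring R] [StrongRankCondition R] [AddCommGroup M] [Module R M]

lemma finrank_initialSpan_le (e : ℕ → M) (n : ℕ) : finrank R (initialSpan R e n) ≤ n :=
  (finrank_range_le_card _).trans_eq (Fintype.card_fin n)

variable [Nontrivial R]

lemma finrank_initialSpan {e : ℕ → M} {m n : ℕ}
    (he : LinearIndependent R fun i : Fin m => e i) (hnm : n ≤ m) :
    finrank R (initialSpan R e n) = n :=
  (finrank_span_eq_card (he.comp (Fin.castLE hnm) (Fin.castLE_injective hnm))).trans
    (Fintype.card_fin n)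

lemma exists_submodule_le_finrank_eq {S : Submodule R M} {n : ℕ} (hn : n ≤ finrank R S) :
    ∃ A ≤ S, finrank R A = n := by
  obtain ⟨v, hv⟩ := exists_linearIndependent_of_le_finrank hn
  refine ⟨(span R (Set.range v)).map S.subtype, map_subtype_le S _, ?_⟩
  rw [finrank_map_subtype_eq, finrank_span_eq_card hv, Fintype.card_fin]

end Finrank

section MulFiltered

variable (R : Type*) {A : Type*} [CommSemiring R] [Semiring A] [Algebra R A]

/-- A sequence in an algebra is multiplicatively filtered if the product of its terms of indices
`i` and `j` is a linear combination of the terms of index at most `i + j`. -/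
def IsMulFiltered (e : ℕ → A) : Prop :=
  ∀ i j, e i * e j ∈ initialSpan R e (i + j + 1)

variable {R}

lemma isMulFiltered_pow (a : A) : IsMulFiltered R (a ^ · : ℕ → A) := fun i j => by
  simpa only [pow_add] using mem_initialSpan (R := R) (e := (a ^ ·)) (Nat.lt_succ_self (i + j))

namespace IsMulFiltered

variable {e : ℕ → A}

lemma map {B : Type*} [Semiring B] [Algebra R B] (he : IsMulFiltered R e) (φ : A →ₐ[R] B) :
    IsMulFiltered R (φ ∘ e) := fun i j => by
  have := mem_map_of_mem (f := φ.toLinearMap) (he i j)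
  rw [map_initialSpan] at this
  simpa using this

lemma initialSpan_mul_le (he : IsMulFiltered R e) (p q : ℕ) :
    initialSpan R e p * initialSpan R e q ≤ initialSpan R e (p + q - 1) := by
  conv_lhs => rw [initialSpan, initialSpan, span_mul_span]
  rw [span_le]
  rintro _ ⟨_, ⟨i, rfl⟩, _, ⟨j, rfl⟩, rfl⟩
  exact initialSpan_mono (by lia) (he i j)

end IsMulFiltered

end MulFiltered

section MixedRadix

variable {F A : Type*} [CommSemiring F] [Semiring A] [Algebra F A]

/-- The products `e j • a ^ i` with `j < f`, in lexicographic order with `i` most significant: the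
term of index `f * i + j` is `e j • a ^ i`. -/
def mixedRadix (f : ℕ) (e : ℕ → F) (a : A) (n : ℕ) : A :=
  e (n % f) • a ^ (n / f)

lemma mixedRadix_add_mul {f j : ℕ} (hj : j < f) (e : ℕ → F) (a : A) (i : ℕ) :
    mixedRadix f e a (j + f * i) = e j • a ^ i := by
  simp [mixedRadix, Nat.add_mul_mod_self_left, Nat.mod_eq_of_lt hj,
    Nat.add_mul_div_left _ _ (Nat.zero_lt_of_lt hj), Nat.div_eq_of_lt hj]

variable {K : Type*} [CommSemiring K] [Algebra K F] [Algebra K A] [IsScalarTower K F A]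
  {f : ℕ} {e : ℕ → F}

-- Since `e 0, …, e (f - 1)` span `F`, terms `e k` with `k ≥ f` never force a higher power of `a`.
lemma smul_pow_mem_initialSpan_mixedRadix (hef : initialSpan K e f = ⊤) (a : A) (i : ℕ) {n : ℕ}
    {x : F} (hx : x ∈ initialSpan K e n) :
    x • a ^ i ∈ initialSpan K (mixedRadix f e a) (n + f * i) := by
  let φ : F →ₗ[K] A := (LinearMap.toSpanSingleton F A (a ^ i)).restrictScalars K
  suffices h : initialSpan K e (min n f) ≤
      (initialSpan K (mixedRadix f e a) (n + f * i)).comap φ by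
    refine h ?_
    rcases min_choice n f with hmin | hmin <;> rw [hmin]
    · exact hx
    · exact hef ▸ mem_top
  refine initialSpan_le_iff.2 fun j hj => ?_
  have hφ : φ (e j) = mixedRadix f e a (j + f * i) :=
    (mixedRadix_add_mul (hj.trans_le (min_le_right n f)) e a i).symm
  rw [mem_comap, hφ]
  exact mem_initialSpan (by lia)

lemma isMulFiltered_mixedRadix (he : IsMulFiltered K e) (hef : initialSpan K e f = ⊤) (a : A) :
    IsMulFiltered K (mixedRadix f e a) := by
  intro m n
  have hmul : mixedRadix f e a m * mixedRadix f e a n =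
      (e (m % f) * e (n % f)) • a ^ (m / f + n / f) := by
    rw [mixedRadix, mixedRadix, smul_mul_smul_comm, pow_add]
  have hindex : m % f + n % f + 1 + f * (m / f + n / f) = m + n + 1 := by
    have := Nat.mod_add_div m f
    have := Nat.mod_add_div n f
    lia
  rw [hmul, ← hindex]
  exact smul_pow_mem_initialSpan_mixedRadix hef a _ (he _ _)

variable {a : A} {d : ℕ}

lemma linearIndependent_mixedRadix (he : LinearIndependent K fun j : Fin f => e j)
    (ha : LinearIndependent F fun i : Fin d => a ^ (i : ℕ)) :
    LinearIndependent K fun n : Fin (d * f) => mixedRadix f e a n := by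
  rw [← linearIndependent_equiv ((Equiv.prodComm _ _).trans finProdFinEquiv)]
  convert linearIndependent_smul he ha with x
  exact mixedRadix_add_mul x.1.2 e a x.2

lemma initialSpan_mixedRadix_eq_top (he : initialSpan K e f = ⊤)
    (ha : initialSpan F (a ^ · : ℕ → A) d = ⊤) :
    initialSpan K (mixedRadix f e a) (d * f) = ⊤ := by
  rw [eq_top_iff, ← restrictScalars_top K F A, ← ha, initialSpan, ← span_smul_of_span_eq_top he,
    span_le]
  rintro _ ⟨_, ⟨j, rfl⟩, _, ⟨i, rfl⟩, rfl⟩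
  change e j • a ^ (i : ℕ) ∈ _
  rw [← mixedRadix_add_mul j.2]
  exact mem_initialSpan (finProdFinEquiv (i, j)).2

end MixedRadix

/-- The algebra `A` has a finite basis `e 0, …, e (n - 1)` that is an initial segment of a
multiplicatively filtered sequence. The sequence is total to avoid indices in `Fin n`; its remaining
terms are immaterial. -/
def HasMulFilteredBasis (R A : Type*) [CommSemiring R] [Semiring A] [Algebra R A] : Prop :=
  ∃ (n : ℕ) (e : ℕ → A), IsMulFiltered R e ∧ (LinearIndependent R fun i : Fin n => e i) ∧
    initialSpan R e n = ⊤

lemma hasMulFilteredBasis_of_powerBasis {R A : Type*} [CommRing R] [Ring A] [Algebra R A]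
    (pb : PowerBasis R A) : HasMulFilteredBasis R A :=
  ⟨pb.dim, (pb.gen ^ ·), isMulFiltered_pow _, by simpa using pb.basis.linearIndependent,
    by simpa [initialSpan] using pb.basis.span_eq⟩

lemma HasMulFilteredBasis.trans_powerBasis {K F A : Type*} [CommRing K] [CommRing F] [Ring A]
    [Algebra K F] [Algebra F A] [Algebra K A] [IsScalarTower K F A]
    (hF : HasMulFilteredBasis K F) (pb : PowerBasis F A) : HasMulFilteredBasis K A := by
  obtain ⟨f, e, he, hind, hspan⟩ := hF
  refine ⟨pb.dim * f, mixedRadix f e pb.gen, isMulFiltered_mixedRadix he hspan _,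
    linearIndependent_mixedRadix hind ?_, initialSpan_mixedRadix_eq_top hspan ?_⟩
  · simpa using pb.basis.linearIndependent
  · simpa [initialSpan] using pb.basis.span_eq

lemma linearIndependent_pow_of_transcendental {R A : Type*} [CommRing R] [Ring A] [Algebra R A]
    {a : A} (ha : Transcendental R a) : LinearIndependent R fun i : ℕ => a ^ i := by
  simpa [Function.comp_def] using (Polynomial.basisMonomials R).linearIndependent.map'
    (Polynomial.aeval a).toLinearMap (LinearMap.ker_eq_bot.2 (transcendental_iff_injective.1 ha))

section Field

variable {K L : Type*} [Field K] [Field L] [Algebra K L]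

open IntermediateField in
lemma hasMulFilteredBasis_of_fg [Algebra.IsAlgebraic K L] {F : IntermediateField K L}
    (hF : F.FG) : HasMulFilteredBasis K F := by
  refine induction_on_adjoin_fg (fun E => HasMulFilteredBasis K E) ?_ (fun E a hE => ?_) F hF
  · rw [← adjoin_zero]
    exact hasMulFilteredBasis_of_powerBasis (adjoin.powerBasis isIntegral_zero)
  · change HasMulFilteredBasis K E⟮a⟯
    exact hE.trans_powerBasis (adjoin.powerBasis (Algebra.IsAlgebraic.isAlgebraic a).isIntegral)

lemma exists_isMulFiltered_linearIndependent {m : ℕ} (hm : (m : Cardinal) ≤ Module.rank K L) :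
    ∃ e : ℕ → L, IsMulFiltered K e ∧ LinearIndependent K fun i : Fin m => e i := by
  by_cases halg : Algebra.IsAlgebraic K L
  · obtain ⟨v, hv⟩ := Module.le_rank_iff.1 hm
    let F := IntermediateField.adjoin K (Set.range v)
    obtain ⟨n, e, he, hind, hspan⟩ : HasMulFilteredBasis K F :=
      hasMulFilteredBasis_of_fg (IntermediateField.fg_adjoin_of_finite (Set.finite_range v))
    have hvF : LinearIndependent K fun i =>
        (⟨v i, IntermediateField.subset_adjoin K _ ⟨i, rfl⟩⟩ : F) :=
      LinearIndependent.of_comp F.val.toLinearMap hv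
    have hfin : FiniteDimensional K F := ⟨hspan ▸ fg_span (Set.finite_range _)⟩
    have hmn : m ≤ n := calc
      m ≤ finrank K F := by simpa using hvF.fintype_card_le_finrank
      _ = finrank K (initialSpan K e n) := by rw [hspan, finrank_top]
      _ ≤ n := finrank_initialSpan_le e n
    refine ⟨F.val ∘ e, he.map F.val, ?_⟩
    exact (hind.comp (Fin.castLE hmn) (Fin.castLE_injective hmn)).map' F.val.toLinearMap
      (LinearMap.ker_eq_bot.2 F.val.injective)
  · obtain ⟨a, ha⟩ := (Algebra.transcendental_iff_not_isAlgebraic.2 halg).transcendental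
    exact ⟨(a ^ ·), isMulFiltered_pow a,
      (linearIndependent_pow_of_transcendental ha).comp _ Fin.val_injective⟩

end Field

section Tower

variable {K F : Type*} [Field K] [Field F] [Algebra K F]

lemma finrank_restrictScalars {V : Type*} [AddCommGroup V] [Module K V] [Module F V]
    [IsScalarTower K F V] (S : Submodule F V) :
    finrank K (S.restrictScalars K) = finrank K F * finrank F S :=
  (finrank_mul_finrank K F S).symm

variable [FiniteDimensional K F]

lemma natCast_ceilDiv_finrank_le_rank {V : Type*} [AddCommGroup V] [Module K V] [Module F V]
    [IsScalarTower K F V] {t : ℕ} (ht : (t : Cardinal) ≤ Module.rank K V) :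
    ((t ⌈/⌉ finrank K F : ℕ) : Cardinal) ≤ Module.rank F V := by
  by_cases hV : Module.Finite F V
  · have : Module.Finite K V := .trans F V
    rw [← finrank_eq_rank, Nat.cast_le] at ht ⊢
    rwa [ceilDiv_le_iff_le_mul finrank_pos, finrank_mul_finrank]
  · rw [← rank_lt_aleph0_iff, not_lt] at hV
    exact Cardinal.natCast_le_aleph0.trans hV

lemma IsMulFiltered.exists_finrank_mul_le {A : Type*} [Ring A] [Algebra K A] [Algebra F A]
    [IsScalarTower K F A] {e : ℕ → A} (he : IsMulFiltered F e) {m p q r s : ℕ}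
    (hind : LinearIndependent F fun i : Fin m => e i) (hp : p ≤ m) (hq : q ≤ m)
    (hr : r ≤ finrank K F * p) (hs : s ≤ finrank K F * q) :
    ∃ S T : Submodule K A, finrank K S = r ∧ finrank K T = s ∧
      finrank K ↥(S * T) ≤ (p + q - 1) * finrank K F := by
  let V (n : ℕ) : Submodule K A := (initialSpan F e n).restrictScalars K
  have hV {n : ℕ} (hn : n ≤ m) : finrank K (V n) = finrank K F * n := by
    rw [finrank_restrictScalars, finrank_initialSpan hind hn]
  obtain ⟨S, hSV, hSr⟩ : ∃ S ≤ V p, finrank K S = r :=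
    exists_submodule_le_finrank_eq (hr.trans_eq (hV hp).symm)
  obtain ⟨T, hTV, hTs⟩ : ∃ T ≤ V q, finrank K T = s :=
    exists_submodule_le_finrank_eq (hs.trans_eq (hV hq).symm)
  have hST : S * T ≤ V (p + q - 1) := mul_le.2 fun x hx y hy =>
    he.initialSpan_mul_le p q (mul_mem_mul (hSV hx) (hTV hy))
  have : Module.Finite K (V (p + q - 1)) :=
    Module.Finite.trans (R := K) F (initialSpan F e (p + q - 1))
  refine ⟨S, T, hSr, hTs, ?_⟩
  calc finrank K ↥(S * T) ≤ finrank K (V (p + q - 1)) := finrank_mono hST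
    _ = finrank K F * finrank F (initialSpan F e (p + q - 1)) := finrank_restrictScalars _
    _ ≤ finrank K F * (p + q - 1) := Nat.mul_le_mul_left _ (finrank_initialSpan_le e _)
    _ = (p + q - 1) * finrank K F := mul_comm _ _

end Tower

theorem stmt_2_general (K L : Type*) [Field K] [Field L] [Algebra K L] (r s : ℕ)
    (hrL : (r : Cardinal) ≤ Module.rank K L) (hsL : (s : Cardinal) ≤ Module.rank K L)
    (H : IntermediateField K L) [FiniteDimensional K H] :
    ∃ A B : Submodule K L, finrank K A = r ∧ finrank K B = s ∧
      finrank K ↥(A * B) ≤ (r ⌈/⌉ finrank K H + s ⌈/⌉ finrank K H - 1) * finrank K H := by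
  set p := r ⌈/⌉ finrank K H
  set q := s ⌈/⌉ finrank K H
  have hp : (p : Cardinal) ≤ Module.rank H L := natCast_ceilDiv_finrank_le_rank hrL
  have hq : (q : Cardinal) ≤ Module.rank H L := natCast_ceilDiv_finrank_le_rank hsL
  have hpq : ((max p q : ℕ) : Cardinal) ≤ Module.rank H L := by
    rcases max_choice p q with h | h <;> rwa [h]
  obtain ⟨e, he, hind⟩ := exists_isMulFiltered_linearIndependent hpq
  exact he.exists_finrank_mul_le hind (le_max_left p q) (le_max_right p q)
    (le_smul_ceilDiv finrank_pos) (le_smul_ceilDiv finrank_pos)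

/-- Optimality part of Theorem 1.1: for a separable extension `K ⊆ L`, positive integers
`r, s ≤ dim_K L`, and a finite-dimensional intermediate field `H` of degree `h = [H:K]`,
there exist `K`-subspaces `A, B` of `L` with `dim_K A = r`, `dim_K B = s` and
`dim_K ⟨AB⟩ ≤ (⌈r/h⌉ + ⌈s/h⌉ - 1)·h`. -/
theorem stmt_2 (K L : Type*) [Field K] [Field L] [Algebra K L]
    (hsep : ∀ x : L, IsAlgebraic K x → IsSeparable K x)
    (r s : ℕ) (hr : 0 < r) (hs : 0 < s)
    (hrL : (r : Cardinal) ≤ Module.rank K L) (hsL : (s : Cardinal) ≤ Module.rank K L)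
    (H : IntermediateField K L) (hHfin : FiniteDimensional K H) :
    ∃ A B : Submodule K L, Module.finrank K A = r ∧ Module.finrank K B = s ∧
      Module.finrank K ↥(A * B) ≤
        (r ⌈/⌉ Module.finrank K ↥H + s ⌈/⌉ Module.finrank K ↥H - 1)
          * Module.finrank K ↥H :=
  stmt_2_general K L r s hrL hsL H
end

section
/- (Hou–Leung–Xiang) Let K ⊆ L be a commutative field extension in which every element of L that is algebraic over K is separable over K, and let A, B be nonzero finite-dimensional K-subspaces of L. Let H = {x ∈ L : x·⟨AB⟩ ⊆ ⟨AB⟩} be the stabilizer of ⟨AB⟩. Then dim_K⟨AB⟩ ≥ dim_K A + dim_K B − dim_K H. -/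
/-- The stabilizer `{x ∈ L : x·V ⊆ V}` of a `K`-subspace `V` of `L`, as a `K`-subspace. -/
def mulStabilizer (K L : Type*) [Field K] [Field L] [Algebra K L]
    (V : Submodule K L) : Submodule K L where
  carrier := {x : L | ∀ v ∈ V, x * v ∈ V}
  add_mem' := by
    intro x y hx hy v hv
    rw [add_mul]
    exact V.add_mem (hx v hv) (hy v hv)
  zero_mem' := by
    intro v hv
    rw [zero_mul]
    exact V.zero_mem
  smul_mem' := by
    intro c x hx v hv
    rw [Algebra.smul_def, mul_assoc, ← Algebra.smul_def]
    exact V.smul_mem c (hx v hv)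

/-!
Fix a nonzero `a ∈ A`. Replacing `A` and `B` by their Dyson `e`-transforms as long as this shrinks
`A` while keeping `a` in it, one reaches a pair to which the bound applies trivially, and this gives
a subalgebra `H` of `L` with `H * a * B ⊆ A * B` and `dim A + dim B ≤ dim (A * B) + dim H`. The
subalgebra depends on `a`, but all candidates lie in one finite extension of `K`; as it is
separable, there are only finitely many of them. If `K` is infinite, `A` is not a finite union of
proper subspaces, so a single `H` serves every `a ∈ A` and hence stabilizes `A * B`. An arbitrary
`K` is replaced by the infinite field `K(t)` inside `L(t)`: it is linearly disjoint from `L`, so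
dimensions do not change, stabilizers do not grow, and separability persists because an
element of `L(t)` integral over `K[t]` is a polynomial with coefficients algebraic over `K`.
-/

namespace LinearKneser

open Module Polynomial

instance finite_mul {K R : Type*} [CommSemiring K] [Semiring R] [Algebra K R]
    (A B : Submodule K R) [Module.Finite K A] [Module.Finite K B] : Module.Finite K ↥(A * B) :=
  Module.Finite.iff_fg.mpr ((Module.Finite.iff_fg.mp ‹_›).mul (Module.Finite.iff_fg.mp ‹_›))

section Stabilizer

variable {K L : Type*} [Field K] [Field L] [Algebra K L] {V : Submodule K L}

/-- The stabilizer `mulStabilizer K L V` as a `K`-subalgebra of `L`, for comparison with the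
subalgebras that stabilize part of `V`. -/
def stabilizerSubalgebra (V : Submodule K L) : Subalgebra K L :=
  (mulStabilizer K L V).toSubalgebra (fun v hv ↦ by rwa [one_mul])
    fun x y hx hy v hv ↦ by rw [mul_assoc]; exact hx _ (hy v hv)

theorem finiteDimensional_of_mul_mem [FiniteDimensional K V] {W : Submodule K L} {v : L}
    (hv : v ≠ 0) (hW : ∀ x ∈ W, x * v ∈ V) : FiniteDimensional K W := by
  let mulRight : W →ₗ[K] V :=
    (LinearMap.mulRight K v ∘ₗ W.subtype).codRestrict V fun x ↦ hW x x.2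
  have mulRight_injective : Function.Injective mulRight := fun x y hxy ↦
    Subtype.ext (mul_right_cancel₀ hv (congrArg Subtype.val hxy))
  exact FiniteDimensional.of_injective mulRight mulRight_injective

theorem finiteDimensional_mulStabilizer [FiniteDimensional K V] (hV : V ≠ ⊥) :
    FiniteDimensional K (mulStabilizer K L V) := by
  obtain ⟨v, hv, hv0⟩ := V.ne_bot_iff.mp hV
  exact finiteDimensional_of_mul_mem hv0 fun x hx ↦ hx v hv

end Stabilizer

section ETransform

/-- The left half of the Dyson `e`-transform of a pair of subspaces of an algebra: the elements
`x ∈ A` with `x * e ∈ B`. It is the linear counterpart of `mulETransformLeft`. -/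
def eTransformLeft {K R : Type*} [CommSemiring K] [Semiring R] [Algebra K R]
    (A B : Submodule K R) (e : R) : Submodule K R :=
  A ⊓ B.comap (LinearMap.mulRight K e)

/-- The right half `B + A * e` of the Dyson `e`-transform of a pair of subspaces of an algebra. The
transform keeps the sum of the dimensions and does not enlarge the product. -/
def eTransformRight {K R : Type*} [CommSemiring K] [Semiring R] [Algebra K R]
    (A B : Submodule K R) (e : R) : Submodule K R :=
  B ⊔ A.map (LinearMap.mulRight K e)

theorem mem_eTransformLeft {K R : Type*} [CommSemiring K] [Semiring R] [Algebra K R]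
    {A B : Submodule K R} {e x : R} : x ∈ eTransformLeft A B e ↔ x ∈ A ∧ x * e ∈ B := Iff.rfl

theorem eTransformLeft_mul_eTransformRight_le {K R : Type*} [CommSemiring K] [CommSemiring R]
    [Algebra K R] (A B : Submodule K R) (e : R) :
    eTransformLeft A B e * eTransformRight A B e ≤ A * B := by
  rw [eTransformRight, Submodule.mul_sup, sup_le_iff]
  refine ⟨mul_le_mul' inf_le_left le_rfl, Submodule.mul_le.mpr ?_⟩
  rintro x ⟨-, hxe⟩ _ ⟨y, hy, rfl⟩
  have hswap : x * (y * e) = y * (x * e) := mul_left_comm x y e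
  exact hswap ▸ Submodule.mul_mem_mul hy hxe

theorem finrank_map_mulRight {K R : Type*} [CommRing K] [Ring R] [NoZeroDivisors R] [Algebra K R]
    {e : R} (he : e ≠ 0) (A : Submodule K R) :
    finrank K (A.map (LinearMap.mulRight K e)) = finrank K A :=
  (A.equivMapOfInjective _ (mul_left_injective₀ he)).finrank_eq.symm

theorem finrank_eTransformLeft_add_finrank_eTransformRight {K R : Type*} [Field K] [Ring R]
    [NoZeroDivisors R] [Algebra K R] (A B : Submodule K R) [FiniteDimensional K A]
    [FiniteDimensional K B] {e : R} (he : e ≠ 0) :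
    finrank K (eTransformLeft A B e) + finrank K (eTransformRight A B e) =
      finrank K A + finrank K B := by
  have map_left : (eTransformLeft A B e).map (LinearMap.mulRight K e) =
      B ⊓ A.map (LinearMap.mulRight K e) := by
    rw [eTransformLeft, ← Submodule.map_inf_eq_map_inf_comap, inf_comm]
  have h := Submodule.finrank_sup_add_finrank_inf_eq B (A.map (LinearMap.mulRight K e))
  rw [← map_left, finrank_map_mulRight he, finrank_map_mulRight he] at h
  rw [eTransformRight]
  omega

end ETransform

section StabilizingSubalgebra

variable {K L : Type*} [Field K] [Field L] [Algebra K L]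

theorem finrank_add_finrank_le_of_map_le_mulStabilizer {A B : Submodule K L}
    [FiniteDimensional K A] [FiniteDimensional K B] (hB : B ≠ ⊥) {a : L} (ha : a ∈ A) (ha0 : a ≠ 0)
    (hA : A.map (LinearMap.mulRight K a⁻¹) ≤ mulStabilizer K L B) :
    finrank K A + finrank K B ≤ finrank K ↥(A * B) + finrank K (mulStabilizer K L B) := by
  have := finiteDimensional_mulStabilizer hB
  have hBA : B.map (LinearMap.mulRight K a) ≤ A * B := by
    rintro _ ⟨b, hb, rfl⟩
    rw [LinearMap.mulRight_apply, mul_comm b a]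
    exact Submodule.mul_mem_mul ha hb
  calc
    finrank K A + finrank K B
      = finrank K (A.map (LinearMap.mulRight K a⁻¹)) +
          finrank K (B.map (LinearMap.mulRight K a)) := by
        rw [finrank_map_mulRight (inv_ne_zero ha0), finrank_map_mulRight ha0]
    _ ≤ finrank K (mulStabilizer K L B) + finrank K ↥(A * B) :=
        add_le_add (Submodule.finrank_mono hA) (Submodule.finrank_mono hBA)
    _ = _ := add_comm _ _

/-- By induction on `dim A`: as long as `a⁻¹A` does not stabilize `B`, some `e`-transform with
`a * e ∈ B` shrinks `A` and keeps `a ∈ A`. -/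
theorem exists_subalgebra_mul_mem {A B : Submodule K L} [FiniteDimensional K A]
    [FiniteDimensional K B] (hB : B ≠ ⊥) {a : L} (ha : a ∈ A) (ha0 : a ≠ 0) :
    ∃ H : Subalgebra K L, (∀ h ∈ H, ∀ b ∈ B, h * (a * b) ∈ A * B) ∧
      finrank K A + finrank K B ≤ finrank K ↥(A * B) + finrank K H := by
  induction hn : finrank K A using Nat.strong_induction_on generalizing A B with
  | _ n ih =>
  subst hn
  by_cases hA : A.map (LinearMap.mulRight K a⁻¹) ≤ mulStabilizer K L B
  · refine ⟨stabilizerSubalgebra B, fun h hh b hb ↦ ?_,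
      finrank_add_finrank_le_of_map_le_mulStabilizer hB ha ha0 hA⟩
    rw [mul_left_comm]
    exact Submodule.mul_mem_mul ha (hh b hb)
  · obtain ⟨e, hae, x, hx, hxe⟩ : ∃ e, a * e ∈ B ∧ ∃ x ∈ A, x * e ∉ B := by
      contrapose! hA
      rintro _ ⟨x, hx, rfl⟩ b hb
      rw [LinearMap.mulRight_apply, mul_assoc]
      exact hA (a⁻¹ * b) (by rwa [mul_inv_cancel_left₀ ha0]) x hx
    have he : e ≠ 0 := by
      rintro rfl
      exact hxe (by simp)
    have hlt : eTransformLeft A B e < A :=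
      lt_of_le_not_ge inf_le_left fun hle ↦ hxe (mem_eTransformLeft.mp (hle hx)).2
    have hB' : eTransformRight A B e ≠ ⊥ := ne_bot_of_le_ne_bot hB le_sup_left
    have : FiniteDimensional K (eTransformLeft A B e) := Submodule.finiteDimensional_inf_left _ _
    have : FiniteDimensional K (eTransformRight A B e) := Submodule.finiteDimensional_sup _ _
    obtain ⟨H, hH, hdim⟩ := ih _ (Submodule.finrank_lt_finrank_of_lt hlt) hB'
      (mem_eTransformLeft.mpr ⟨ha, hae⟩) rfl
    have hmul := eTransformLeft_mul_eTransformRight_le A B e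
    refine ⟨H, fun h hh b hb ↦ hmul (hH h hh b (Submodule.mem_sup_left hb)), ?_⟩
    rw [← finrank_eTransformLeft_add_finrank_eTransformRight A B he]
    exact hdim.trans (by gcongr; exact Submodule.finrank_mono hmul)

/-- A suitable `F` is generated by the coordinates of a spanning set of `V` with respect to a basis
of `L` over the algebraic closure `C` of `K` in `L`: as `H ⊆ C`, every `h ∈ H` is a quotient of
coordinates of `h * v` and `v`. -/
theorem exists_finiteDimensional_forall_subalgebra_le (V : Submodule K L) [FiniteDimensional K V] :
    ∃ F : IntermediateField K L, FiniteDimensional K F ∧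
      ∀ H : Subalgebra K L, (∃ v ≠ 0, ∀ h ∈ H, h * v ∈ V) → H ≤ F.toSubalgebra := by
  let C := algebraicClosure K L
  let b := Basis.ofVectorSpace C L
  obtain ⟨S, hS⟩ := Module.Finite.iff_fg.mp ‹FiniteDimensional K V›
  let coords : Set L := ⋃ s ∈ S, Set.range fun j ↦ (b.repr s j : L)
  let F := IntermediateField.adjoin K coords
  have finiteDimensional_F : FiniteDimensional K F := by
    have : Finite coords := Set.Finite.to_subtype <| S.finite_toSet.biUnion fun s _ ↦
      (Set.range_comp C.val _) ▸ ((b.repr s).finite_range.image _)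
    refine IntermediateField.finiteDimensional_adjoin fun y hy ↦ ?_
    obtain ⟨s, -, j, rfl⟩ := Set.mem_iUnion₂.mp hy
    exact (Algebra.IsAlgebraic.isAlgebraic (R := K) (b.repr s j)).isIntegral.map C.val
  have repr_mem (j) : V ≤ (Subalgebra.toSubmodule F.toSubalgebra).comap
      (C.val.toLinearMap ∘ₗ (b.coord j).restrictScalars K) := by
    rw [← hS, Submodule.span_le]
    exact fun s hs ↦ IntermediateField.subset_adjoin K _ (Set.mem_biUnion hs ⟨j, rfl⟩)
  refine ⟨F, finiteDimensional_F, ?_⟩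
  rintro H ⟨v, hv0, hHv⟩ x hx
  have hv : v ∈ V := one_mul v ▸ hHv 1 H.one_mem
  have : FiniteDimensional K H := finiteDimensional_of_mul_mem (W := H.toSubmodule) hv0 hHv
  have hxC : x ∈ C := (Algebra.IsAlgebraic.isAlgebraic (R := K) (⟨x, hx⟩ : H)).isIntegral.map H.val
  obtain ⟨j, hj⟩ : ∃ j, b.repr v j ≠ 0 := by
    contrapose! hv0
    exact b.repr.map_eq_zero_iff.mp (Finsupp.ext hv0)
  have repr_mul : (b.repr (x * v) j : L) = x * b.repr v j :=
    congrArg (fun f ↦ (f j : L)) (b.repr.map_smul (⟨x, hxC⟩ : C) v)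
  have hratio : x = b.repr (x * v) j / b.repr v j := by
    rw [repr_mul, mul_div_cancel_right₀]
    exact_mod_cast hj
  rw [IntermediateField.mem_toSubalgebra, hratio]
  exact div_mem (repr_mem j (hHv x hx)) (repr_mem j hv)

theorem finite_subalgebra_le (F : IntermediateField K L) [FiniteDimensional K F]
    [Algebra.IsSeparable K F] : {H : Subalgebra K L | H ≤ F.toSubalgebra}.Finite := by
  have : Finite (IntermediateField K F) :=
    Field.finite_intermediateField_of_exists_primitive_element K F
      (Field.exists_primitive_element K F)
  have : Finite (Subalgebra K F) := Finite.of_equiv _ subalgebraEquivIntermediateField.toEquiv.symm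
  refine (Set.finite_range fun H : Subalgebra K F ↦ H.map F.val).subset fun H hH ↦ ?_
  exact ⟨H.comap F.val, by simpa [Subalgebra.map_comap_eq, IntermediateField.range_val] using hH⟩

end StabilizingSubalgebra

section InfiniteField

variable {K L : Type*} [Field K] [Field L] [Algebra K L]

/-- `A` is covered by the subspaces `{a ∈ A | H * a * B ⊆ A * B}`, for `H` in `S`. -/
theorem exists_le_stabilizerSubalgebra_mul [Infinite K] {A B : Submodule K L}
    {S : Set (Subalgebra K L)} (hS : S.Finite)
    (hAS : ∀ a ∈ A, ∃ H ∈ S, ∀ h ∈ H, ∀ b ∈ B, h * (a * b) ∈ A * B) :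
    ∃ H ∈ S, H ≤ stabilizerSubalgebra (A * B) := by
  have := hS.to_subtype
  let good (H : S) : Submodule K A := ⨅ h : H.1, ⨅ b : B,
    (A * B).comap (LinearMap.mulLeft K (h : L) ∘ₗ LinearMap.mulRight K (b : L) ∘ₗ A.subtype)
  have hcover : ⋃ H, (good H : Set A) = Set.univ := by
    refine Set.eq_univ_of_forall fun a ↦ ?_
    obtain ⟨H, hHS, hH⟩ := hAS a a.2
    refine Set.mem_iUnion.mpr ⟨⟨H, hHS⟩, ?_⟩
    simp only [good, SetLike.mem_coe, Submodule.mem_iInf]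
    exact fun h b ↦ hH h h.2 b b.2
  obtain ⟨H, hH⟩ := Subspace.exists_eq_top_of_iUnion_eq_univ hcover
  refine ⟨H, H.2, fun h hh v hv ↦ ?_⟩
  suffices A * B ≤ (A * B).comap (LinearMap.mulLeft K h) from this hv
  refine Submodule.mul_le.mpr fun a ha b hb ↦ ?_
  have ha_good : (⟨a, ha⟩ : A) ∈ good H := hH ▸ Submodule.mem_top
  simp only [good, Submodule.mem_iInf] at ha_good
  exact ha_good ⟨h, hh⟩ ⟨b, hb⟩

theorem finrank_add_finrank_le_of_infinite [Infinite K]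
    (hsep : ∀ x : L, IsAlgebraic K x → IsSeparable K x) {A B : Submodule K L}
    [FiniteDimensional K A] [FiniteDimensional K B] (hA : A ≠ ⊥) (hB : B ≠ ⊥) :
    finrank K A + finrank K B ≤ finrank K ↥(A * B) + finrank K (mulStabilizer K L (A * B)) := by
  obtain ⟨F, hF, le_F⟩ := exists_finiteDimensional_forall_subalgebra_le (A * B)
  have : Algebra.IsSeparable K F := ⟨fun x ↦ (isSeparable_map_iff F.val F.val.injective).mp <|
    hsep _ ((Algebra.IsAlgebraic.isAlgebraic (R := K) x).algHom F.val)⟩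
  let S : Set (Subalgebra K L) := {H | H ≤ F.toSubalgebra ∧
    finrank K A + finrank K B ≤ finrank K ↥(A * B) + finrank K H}
  have hS : S.Finite := (finite_subalgebra_le F).subset fun H hH ↦ hH.1
  have hAS : ∀ a ∈ A, a ≠ 0 → ∃ H ∈ S, ∀ h ∈ H, ∀ b ∈ B, h * (a * b) ∈ A * B := by
    intro a ha ha0
    obtain ⟨H, hH, hdim⟩ := exists_subalgebra_mul_mem hB ha ha0
    obtain ⟨b, hb, hb0⟩ := B.ne_bot_iff.mp hB
    exact ⟨H, ⟨le_F H ⟨a * b, mul_ne_zero ha0 hb0, fun h hh ↦ hH h hh b hb⟩, hdim⟩, hH⟩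
  obtain ⟨H, hHS, hH⟩ : ∃ H ∈ S, H ≤ stabilizerSubalgebra (A * B) := by
    refine exists_le_stabilizerSubalgebra_mul hS fun a ha ↦ ?_
    rcases eq_or_ne a 0 with rfl | ha0
    · obtain ⟨a, ha, ha0⟩ := A.ne_bot_iff.mp hA
      obtain ⟨H, hHS, -⟩ := hAS a ha ha0
      exact ⟨H, hHS, fun h _ b _ ↦ by simp⟩
    · exact hAS a ha ha0
  have := finiteDimensional_mulStabilizer (mul_ne_zero (M₀ := Submodule K L) hA hB)
  have hle : finrank K H ≤ finrank K (mulStabilizer K L (A * B)) :=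
    Submodule.finrank_mono (s := H.toSubmodule) hH
  exact hHS.2.trans (by gcongr)

end InfiniteField

section ExtendScalars

variable {K L E : Type*} [Field K] [Field L] [Field E] [Algebra K E] [Algebra L E]

theorem smul_algebraMap_eq_smul_coe {F : IntermediateField K E} (g : F) (a : L) :
    g • algebraMap L E a = a • (g : E) := by
  rw [IntermediateField.smul_def, smul_eq_mul, mul_comm, Algebra.smul_def]

variable [Algebra K L]

/-- The `F`-subspace of `E` spanned by the image of a `K`-subspace `A` of `L`. If `F` and `L` are
linearly disjoint over `K`, it stands for the base change of `A` to `F`. -/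
def extendScalars (F : IntermediateField K E) (A : Submodule K L) : Submodule F E :=
  Submodule.span F (algebraMap L E '' A)

variable (F : IntermediateField K E)

theorem extendScalars_ne_bot {A : Submodule K L} (hA : A ≠ ⊥) : extendScalars F A ≠ ⊥ := by
  rw [Submodule.ne_bot_iff] at *
  obtain ⟨a, ha, ha0⟩ := hA
  exact ⟨algebraMap L E a, Submodule.subset_span ⟨a, ha, rfl⟩, by simpa using ha0⟩

variable [IsScalarTower K L E]

theorem extendScalars_span (S : Set L) :
    extendScalars F (Submodule.span K S) = Submodule.span F (algebraMap L E '' S) := by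
  have himage : algebraMap L E '' Submodule.span K S = Submodule.span K (algebraMap L E '' S) :=
    congrArg SetLike.coe (Submodule.map_span (IsScalarTower.toAlgHom K L E).toLinearMap S)
  rw [extendScalars, himage, Submodule.span_span_of_tower]

theorem extendScalars_mul (A B : Submodule K L) :
    extendScalars F (A * B) = extendScalars F A * extendScalars F B := by
  rw [Submodule.mul_eq_span_mul_set, extendScalars_span, Set.image_mul, ← Submodule.span_mul_span]
  rfl

instance finiteDimensional_extendScalars (A : Submodule K L) [FiniteDimensional K A] :
    FiniteDimensional F (extendScalars F A) := by
  obtain ⟨S, rfl⟩ := Module.Finite.iff_fg.mp ‹FiniteDimensional K A›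
  rw [extendScalars_span]
  exact FiniteDimensional.span_of_finite F (S.finite_toSet.image _)

variable {F}

theorem finrank_extendScalars (hF : F.LinearDisjoint L) (A : Submodule K L)
    [FiniteDimensional K A] : finrank F (extendScalars F A) = finrank K A := by
  let b := finBasis K A
  have hb : LinearIndependent F (algebraMap L E ∘ A.subtype ∘ b) :=
    hF.linearIndependent_right' (b.linearIndependent.map' _ A.ker_subtype)
  have hA : A = Submodule.span K (Set.range (A.subtype ∘ b)) := by
    rw [Set.range_comp, Submodule.span_image, b.span_eq, Submodule.map_subtype_top]
  conv_lhs => rw [hA]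
  rw [extendScalars_span, ← Set.range_comp, finrank_span_eq_card hb, Fintype.card_fin]

/-- By linear disjointness, `b` stays a basis of the `L`-span of `F`, and `π` extends to `E` the
coordinates with respect to it. -/
theorem exists_linearMap_coord_mem (hF : F.LinearDisjoint L) {ι : Type*} (b : Basis ι K F) :
    ∃ π : E →ₗ[L] ι →₀ L, ∀ (A : Submodule K L), ∀ y ∈ extendScalars F A,
      (∀ i, π y i ∈ A) ∧ Finsupp.linearCombination L (fun i ↦ (b i : E)) (π y) = y := by
  let lc := Finsupp.linearCombination L fun i ↦ (b i : E)
  have lc_injective : Function.Injective lc :=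
    hF.linearIndependent_left b.linearIndependent
  obtain ⟨π, hπ⟩ := lc.exists_leftInverse_of_injective (LinearMap.ker_eq_bot.mpr lc_injective)
  have eq_lc (g : F) : (g : E) = lc ((b.repr g).mapRange (algebraMap K L) (map_zero _)) := by
    conv_lhs => rw [← b.linearCombination_repr g, Finsupp.linearCombination_apply]
    rw [Finsupp.linearCombination_apply, Finsupp.sum_mapRange_index (by simp)]
    simp [Finsupp.sum]
  have π_apply (g : F) : π g = (b.repr g).mapRange (algebraMap K L) (map_zero _) := by
    rw [eq_lc g]
    exact LinearMap.congr_fun hπ _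
  refine ⟨π, fun A y hy ↦ ?_⟩
  induction hy using Submodule.closure_induction with
  | zero => simp
  | add x y _ _ hx hy =>
    exact ⟨fun i ↦ by simpa using A.add_mem (hx.1 i) (hy.1 i), by rw [map_add, map_add, hx.2, hy.2]⟩
  | smul_mem g x hx =>
    obtain ⟨a, ha, rfl⟩ := hx
    rw [smul_algebraMap_eq_smul_coe, map_smul, map_smul, π_apply]
    refine ⟨fun i ↦ ?_, congrArg (a • ·) (eq_lc g).symm⟩
    simpa [mul_comm a, ← Algebra.smul_def] using A.smul_mem (b.repr g i) ha

theorem mulStabilizer_extendScalars_le (hF : F.LinearDisjoint L) {A : Submodule K L}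
    (hA : A ≠ ⊥) :
    mulStabilizer F E (extendScalars F A) ≤ extendScalars F (mulStabilizer K L A) := by
  obtain ⟨π, hπ⟩ := exists_linearMap_coord_mem hF (Basis.ofVectorSpace K F)
  obtain ⟨a, ha, ha0⟩ := A.ne_bot_iff.mp hA
  intro x hx
  have smul_mem (c : L) (hc : c ∈ A) : c • x ∈ extendScalars F A := by
    rw [Algebra.smul_def, mul_comm]
    exact hx _ (Submodule.subset_span ⟨c, hc, rfl⟩)
  have coord_mem (i) : π x i ∈ mulStabilizer K L A := fun c hc ↦ by
    simpa [mul_comm] using (hπ A _ (smul_mem c hc)).1 i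
  have eq_sum :
      Finsupp.linearCombination L (fun i ↦ (Basis.ofVectorSpace K F i : E)) (π x) = x := by
    have := (hπ A _ (smul_mem a ha)).2
    rw [map_smul, map_smul] at this
    exact smul_right_injective E ha0 this
  rw [← eq_sum, Finsupp.linearCombination_apply]
  refine Submodule.sum_mem _ fun i _ ↦ ?_
  beta_reduce
  rw [← smul_algebraMap_eq_smul_coe]
  exact Submodule.smul_mem _ _ (Submodule.subset_span ⟨_, coord_mem i, rfl⟩)

theorem finrank_add_finrank_le_of_linearDisjoint [Infinite F] (hF : F.LinearDisjoint L)
    (hsep : ∀ x : E, IsAlgebraic F x → IsSeparable F x) {A B : Submodule K L}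
    [FiniteDimensional K A] [FiniteDimensional K B] (hA : A ≠ ⊥) (hB : B ≠ ⊥) :
    finrank K A + finrank K B ≤ finrank K ↥(A * B) + finrank K (mulStabilizer K L (A * B)) := by
  have hAB : A * B ≠ ⊥ := mul_ne_zero hA hB
  have := finiteDimensional_mulStabilizer hAB
  calc
    finrank K A + finrank K B
      = finrank F (extendScalars F A) + finrank F (extendScalars F B) := by
        rw [finrank_extendScalars hF, finrank_extendScalars hF]
    _ ≤ finrank F (extendScalars F (A * B)) +
          finrank F (mulStabilizer F E (extendScalars F (A * B))) := by
        rw [extendScalars_mul]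
        exact finrank_add_finrank_le_of_infinite hsep (extendScalars_ne_bot F hA)
          (extendScalars_ne_bot F hB)
    _ ≤ finrank F (extendScalars F (A * B)) +
          finrank F (extendScalars F (mulStabilizer K L (A * B))) := by
        gcongr
        exact Submodule.finrank_mono (mulStabilizer_extendScalars_le hF hAB)
    _ = finrank K ↥(A * B) + finrank K (mulStabilizer K L (A * B)) := by
        rw [finrank_extendScalars hF, finrank_extendScalars hF]

end ExtendScalars

section SimpleTranscendental

open IntermediateField
open scoped algebraAdjoinAdjoin

variable {K L : Type*} [Field K] [Field L] [Algebra K L]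

theorem infinite_adjoin_of_transcendental {E : Type*} [Field E] [Algebra K E] {t : E}
    (ht : Transcendental K t) : Infinite K⟮t⟯ := by
  have gen_transcendental : Transcendental K (AdjoinSimple.gen K t) :=
    (transcendental_algebraMap_iff (algebraMap K⟮t⟯ E).injective).mp ht
  exact gen_transcendental.infinite

theorem linearIndependent_algebraAdjoin_of_transcendental {R S T : Type*} [CommRing R]
    [CommRing S] [CommRing T] [Algebra R S] [Algebra R T] [Algebra S T] [IsScalarTower R S T]
    {t : T} (ht : Transcendental S t) {ι : Type*} {b : ι → S}
    (hb : LinearIndependent R b) :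
    LinearIndependent (Algebra.adjoin R {t}) (algebraMap S T ∘ b) := by
  rw [linearIndependent_iff']
  intro s g hg i hi
  choose p hp using fun j ↦ Algebra.adjoin_mem_exists_aeval R t (g j).2
  have hsum : ∑ j ∈ s, C (b j) * (p j).map (algebraMap R S) = 0 := by
    refine transcendental_iff.mp ht _ ?_
    rw [← hg, map_sum]
    refine Finset.sum_congr rfl fun j _ ↦ ?_
    rw [map_mul, aeval_C, aeval_map_algebraMap, hp, mul_comm]
    rfl
  have hp_zero : p i = 0 := by
    ext n
    refine linearIndependent_iff'.mp hb s (fun j ↦ (p j).coeff n) ?_ i hi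
    simpa [finsetSum_coeff, Algebra.smul_def, mul_comm] using congrArg (coeff · n) hsum
  rw [← Subtype.coe_inj, ← hp i, hp_zero, map_zero, ZeroMemClass.coe_zero]

theorem linearDisjoint_adjoin_of_transcendental {E : Type*} [Field E] [Algebra K E] [Algebra L E]
    [IsScalarTower K L E] {t : E} (ht : Transcendental L t) : K⟮t⟯.LinearDisjoint L := by
  let b := Basis.ofVectorSpace K L
  refine IntermediateField.LinearDisjoint.of_basis_right' b ?_
  rw [← LinearIndependent.iff_fractionRing (R := Algebra.adjoin K {t})]
  exact linearIndependent_algebraAdjoin_of_transcendental ht b.linearIndependent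

variable (K L) in
theorem transcendental_ratFunc_X : Transcendental K (RatFunc.X : RatFunc L) :=
  RatFunc.transcendental_X.restrictScalars (algebraMap K L).injective

theorem exists_polynomial_of_isIntegral_adjoin_X {x : RatFunc L}
    (hx : IsIntegral (Algebra.adjoin K {(RatFunc.X : RatFunc L)}) x) :
    ∃ p : L[X], algebraMap L[X] (RatFunc L) p = x ∧ ∀ n, IsIntegral K (p.coeff n) := by
  let := Polynomial.algebra K L
  let e := algEquivOfTranscendental K _ (transcendental_ratFunc_X K L)
  have isIntegral_polynomial : IsIntegral K[X] x :=
    hx.map_of_comp_eq (e.symm : _ →+* K[X]) (.id _) <| by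
      ext y
      obtain ⟨p, rfl⟩ := e.surjective y
      have algebraMap_eq_aeval : algebraMap K[X] (RatFunc L) p = aeval RatFunc.X p := by
        rw [← aeval_map_algebraMap L, RatFunc.aeval_X_left_eq_algebraMap]
        rfl
      simpa [e] using algebraMap_eq_aeval
  obtain ⟨p, rfl⟩ := IsIntegrallyClosed.isIntegral_iff.mp
    (isIntegral_polynomial.tower_top (A := L[X]))
  have isIntegral_p : IsIntegral K[X] p :=
    (isIntegral_algebraMap_iff (RatFunc.algebraMap_injective L)).mp isIntegral_polynomial
  exact ⟨p, rfl, isIntegral_p.coeff⟩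

theorem isSeparable_algebraMap_of_forall_coeff {p : L[X]} (hp : ∀ n, IsSeparable K (p.coeff n)) :
    IsSeparable K⟮(RatFunc.X : RatFunc L)⟯ (algebraMap L[X] (RatFunc L) p) := by
  rw [← mem_separableClosure_iff, ← RatFunc.aeval_X_left_eq_algebraMap, aeval_eq_sum_range]
  refine sum_mem fun n _ ↦ ?_
  rw [Algebra.smul_def]
  refine mul_mem (mem_separableClosure_iff.mpr ?_) (pow_mem ?_ n)
  · have map_injective := (algebraMap L (RatFunc L)).injective
    exact ((hp n).map (IsScalarTower.toAlgHom K L (RatFunc L)) map_injective).tower_top _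
  · exact (separableClosure _ _).algebraMap_mem (AdjoinSimple.gen K (RatFunc.X : RatFunc L))

theorem isSeparable_of_isAlgebraic_adjoin_X (hsep : ∀ x : L, IsAlgebraic K x → IsSeparable K x)
    {x : RatFunc L} (hx : IsAlgebraic K⟮(RatFunc.X : RatFunc L)⟯ x) :
    IsSeparable K⟮(RatFunc.X : RatFunc L)⟯ x := by
  obtain ⟨d, hd, hdx⟩ := (isAlgebraic_adjoin_iff.mp hx).exists_integral_multiple
  obtain ⟨p, hp, hp_coeff⟩ := exists_polynomial_of_isIntegral_adjoin_X hdx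
  have hsep_dx := isSeparable_algebraMap_of_forall_coeff fun n ↦ hsep _ (hp_coeff n).isAlgebraic
  have hd0 : (d : RatFunc L) ≠ 0 := by exact_mod_cast hd
  have hsep_d : (d : RatFunc L) ∈ separableClosure K⟮(RatFunc.X : RatFunc L)⟯ (RatFunc L) :=
    (separableClosure _ _).algebraMap_mem
      (algebraMap (Algebra.adjoin K {(RatFunc.X : RatFunc L)}) K⟮(RatFunc.X : RatFunc L)⟯ d)
  rw [hp, ← mem_separableClosure_iff] at hsep_dx
  have hx_eq : x = d • x / d := by
    rw [Algebra.smul_def]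
    exact (mul_div_cancel_left₀ x hd0).symm
  rw [← mem_separableClosure_iff, hx_eq]
  exact div_mem hsep_dx hsep_d

end SimpleTranscendental

end LinearKneser

/-- **Theorem (Hou–Leung–Xiang)**, a linear analogue of Kneser's theorem:
for a separable extension `K ⊆ L` and nonzero finite-dimensional `K`-subspaces
`A, B ⊆ L`, with `H` the stabilizer of `⟨AB⟩`, one has
`dim_K ⟨AB⟩ ≥ dim_K A + dim_K B - dim_K H`. -/
theorem stmt_3 (K L : Type*) [Field K] [Field L] [Algebra K L]
    (hsep : ∀ x : L, IsAlgebraic K x → IsSeparable K x)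
    (A B : Submodule K L) (hA : A ≠ ⊥) (hB : B ≠ ⊥)
    (hAfin : FiniteDimensional K A) (hBfin : FiniteDimensional K B) :
    (Module.finrank K ↥(A * B) : ℤ) ≥
      (Module.finrank K A : ℤ) + (Module.finrank K B : ℤ)
        - (Module.finrank K ↥(mulStabilizer K L (A * B)) : ℤ) := by
  have hdisjoint : (IntermediateField.adjoin K {(RatFunc.X : RatFunc L)}).LinearDisjoint L :=
    LinearKneser.linearDisjoint_adjoin_of_transcendental RatFunc.transcendental_X
  have : Infinite (IntermediateField.adjoin K {(RatFunc.X : RatFunc L)}) :=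
    LinearKneser.infinite_adjoin_of_transcendental (LinearKneser.transcendental_ratFunc_X K L)
  have kneser := LinearKneser.finrank_add_finrank_le_of_linearDisjoint hdisjoint
    (fun _ ↦ LinearKneser.isSeparable_of_isAlgebraic_adjoin_X hsep) hA hB
  omega
end

section
/- Let G be an abelian group (written multiplicatively) and let r, s be positive integers such that G has subsets of cardinalities r and s. Then the minimum of |AB|, taken over all finite subsets A, B ⊆ G with |A| = r and |B| = s, equals the minimum of (⌈r/h⌉ + ⌈s/h⌉ − 1)·h, taken over all h that are cardinalities of finite subgroups of G. -/
open scoped Pointwise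

/-!
The minimum of `|AB|` is bounded below by Kneser's theorem: some finite subgroup `H` satisfies
`|AH| + |BH| ≤ |AB| + |H|`, and `AH` consists of at least `⌈r/|H|⌉` cosets of `H`. Conversely, for
a finite subgroup `H`, take `A` and `B` inside the preimages of two subsets of `G ⧸ H` of sizes
`⌈r/|H|⌉` and `⌈s/|H|⌉` whose product is smaller than the sum of their sizes. Such subsets are
initial segments of an enumeration for which the index of a product is at most the sum of the
indices: the powers of an element of infinite order, or the mixed-radix order on a finite product
of cyclic groups.

Kneser's theorem is proved following DeVos. If `A` does not lie in one coset of the stabilizer of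
`B`, then after a translation `A ∩ B` is nonempty and `A ⊄ B`, and induction applies to the pair
`A ∩ B`, `A ∪ B`. Among the sets `C ⊆ AB` witnessing that `AB` is large, choose one that is stable
under a subgroup `K` of least order. Then `AB` is itself `K`-stable, so either `A` and `B` are
`K`-stable, and `C` gives the bound, or `AK`, `BK` is a larger pair with the same product.
-/

section

open Finset MulAction

section CosetHull

variable {G : Type*} [Group G] (H : Subgroup G) [Finite H]

/-- The union of finitely many left cosets of a finite subgroup, as a finset of the group: the
preimage of `T` under `G → G ⧸ H`. -/
noncomputable def cosetUnion (T : Finset (G ⧸ H)) : Finset G :=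
  have : Finite (QuotientGroup.mk ⁻¹' (T : Set (G ⧸ H)) : Set G) :=
    .of_equiv _ (QuotientGroup.preimageMkEquivSubgroupProdSet H T).symm
  (Set.toFinite (QuotientGroup.mk ⁻¹' (T : Set (G ⧸ H)))).toFinset

open Classical in
/-- The product set `A * H` for a finite subgroup `H`, as a finset: the union of the left cosets
of `H` that meet `A`. In particular `cosetHull H {g}` is the coset `gH`. -/
noncomputable def cosetHull (A : Finset G) : Finset G :=
  cosetUnion H (A.image (↑))

variable {H} {K : Subgroup G} [Finite K] {A B S : Finset G} {g x : G}

lemma mem_cosetUnion {T : Finset (G ⧸ H)} : x ∈ cosetUnion H T ↔ (x : G ⧸ H) ∈ T := by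
  simp [cosetUnion]

lemma card_cosetUnion (T : Finset (G ⧸ H)) : #(cosetUnion H T) = Nat.card H * #T := by
  have hcoe : (cosetUnion H T : Set G) = QuotientGroup.mk ⁻¹' (T : Set (G ⧸ H)) := by
    ext; simp [mem_cosetUnion]
  rw [← Set.ncard_coe_finset, hcoe, ← Nat.card_coe_set_eq, QuotientGroup.card_preimage_mk,
    Nat.card_coe_set_eq, Set.ncard_coe_finset]

lemma mem_cosetHull : x ∈ cosetHull H A ↔ ∃ a ∈ A, a⁻¹ * x ∈ H := by
  simp [cosetHull, mem_cosetUnion, QuotientGroup.eq]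

lemma mem_cosetHull_singleton : x ∈ cosetHull H {g} ↔ g⁻¹ * x ∈ H := by
  simp [mem_cosetHull]

lemma subset_cosetHull : A ⊆ cosetHull H A :=
  fun a ha ↦ mem_cosetHull.2 ⟨a, ha, by simp⟩

lemma cosetHull_mono (h : A ⊆ B) : cosetHull H A ⊆ cosetHull H B := by
  intro x hx
  obtain ⟨a, ha, hax⟩ := mem_cosetHull.1 hx
  exact mem_cosetHull.2 ⟨a, h ha, hax⟩

lemma cosetHull_subset_cosetHull_of_le (h : H ≤ K) : cosetHull H A ⊆ cosetHull K A := by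
  intro x hx
  obtain ⟨a, ha, hax⟩ := mem_cosetHull.1 hx
  exact mem_cosetHull.2 ⟨a, ha, h hax⟩

lemma cosetHull_union [DecidableEq G] : cosetHull H (A ∪ B) = cosetHull H A ∪ cosetHull H B := by
  ext x
  simp only [mem_cosetHull, mem_union, or_and_right, exists_or]

lemma cosetHull_bot : cosetHull ⊥ A = A := by
  ext x
  simp [mem_cosetHull, inv_mul_eq_one]

lemma cosetHull_smul [DecidableEq G] : cosetHull H (g • A) = g • cosetHull H A := by
  ext x
  rw [← inv_smul_mem_iff, mem_cosetHull, mem_cosetHull, smul_finset_def, exists_mem_image]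
  simp only [smul_eq_mul, mul_inv_rev, mul_assoc]

lemma cosetHull_singleton_eq (h : x ∈ cosetHull K {g}) : cosetHull K {x} = cosetHull K {g} := by
  ext y
  simp only [mem_cosetHull_singleton] at h ⊢
  rw [← K.mul_mem_cancel_left h]
  simp

lemma disjoint_cosetHull_singleton_of_ne {a b : G} (hab : cosetHull K {a} ≠ cosetHull K {b}) :
    Disjoint (cosetHull K {a}) (cosetHull K {b}) :=
  disjoint_left.2 fun _ hxa hxb ↦
    hab ((cosetHull_singleton_eq hxa).symm.trans (cosetHull_singleton_eq hxb))

lemma card_cosetHull [DecidableEq (G ⧸ H)] (A : Finset G) :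
    #(cosetHull H A) = Nat.card H * #(A.image ((↑) : G → G ⧸ H)) := by
  rw [cosetHull, card_cosetUnion]
  congr!

lemma card_cosetHull_singleton (g : G) : #(cosetHull H {g}) = Nat.card H := by
  classical simp [card_cosetHull]

lemma card_dvd_card_cosetHull (A : Finset G) : Nat.card H ∣ #(cosetHull H A) := by
  classical exact ⟨_, card_cosetHull A⟩

lemma card_ceilDiv_le_card_image_mk [DecidableEq (G ⧸ H)] (A : Finset G) :
    #A ⌈/⌉ Nat.card H ≤ #(A.image ((↑) : G → G ⧸ H)) := by
  rw [ceilDiv_le_iff_le_mul Nat.card_pos, ← card_cosetHull]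
  exact card_le_card subset_cosetHull

lemma cosetHull_singleton_inter_subset [DecidableEq G] (hHK : H ≤ K) :
    cosetHull K {g} ∩ cosetHull H S ⊆ cosetHull H (S ∩ cosetHull K {g}) := by
  intro x hx
  obtain ⟨hxg, hxS⟩ := mem_inter.1 hx
  obtain ⟨s, hs, hsx⟩ := mem_cosetHull.1 hxS
  refine mem_cosetHull.2 ⟨s, mem_inter.2 ⟨hs, ?_⟩, hsx⟩
  rw [mem_cosetHull_singleton] at hxg ⊢
  simpa using mul_mem hxg (inv_mem (hHK hsx))

lemma card_add_card_cosetHull_le [DecidableEq G] (hHK : H ≤ K) (hg : g ∈ S) :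
    Nat.card K + #(cosetHull H S) ≤
      #(cosetHull K S) + #(cosetHull H (S ∩ cosetHull K {g})) := by
  have hunion : cosetHull K {g} ∪ cosetHull H S ⊆ cosetHull K S :=
    union_subset (cosetHull_mono (singleton_subset_iff.2 hg))
      (cosetHull_subset_cosetHull_of_le hHK)
  calc Nat.card K + #(cosetHull H S)
      = #(cosetHull K {g} ∪ cosetHull H S) + #(cosetHull K {g} ∩ cosetHull H S) := by
        rw [card_union_add_card_inter, card_cosetHull_singleton]
    _ ≤ _ := add_le_add (card_le_card hunion) (card_le_card (cosetHull_singleton_inter_subset hHK))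

lemma two_mul_card_add_card_le_card_cosetHull_add [DecidableEq G] {a b : G} (ha : a ∈ S)
    (hb : b ∈ S) (hab : cosetHull K {a} ≠ cosetHull K {b}) :
    2 * Nat.card K + #S ≤
      #(cosetHull K S) + #(S ∩ cosetHull K {a}) + #(S ∩ cosetHull K {b}) := by
  have hunion : cosetHull K {a} ∪ cosetHull K {b} ∪ S ⊆ cosetHull K S :=
    union_subset (union_subset (cosetHull_mono (singleton_subset_iff.2 ha))
      (cosetHull_mono (singleton_subset_iff.2 hb))) subset_cosetHull
  have hcard : #(cosetHull K {a} ∪ cosetHull K {b}) = 2 * Nat.card K := by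
    rw [card_union_of_disjoint (disjoint_cosetHull_singleton_of_ne hab), card_cosetHull_singleton,
      card_cosetHull_singleton, two_mul]
  have hinter : #((cosetHull K {a} ∪ cosetHull K {b}) ∩ S) ≤
      #(S ∩ cosetHull K {a}) + #(S ∩ cosetHull K {b}) := by
    rw [inter_comm, inter_union_distrib_left]
    exact card_union_le _ _
  have := card_union_add_card_inter (cosetHull K {a} ∪ cosetHull K {b}) S
  have := card_le_card hunion
  omega

end CosetHull

section SmallProductSets

variable {G : Type*} [CommGroup G]

lemma exists_card_mul_lt_of_enumeration [DecidableEq G] {n a b : ℕ} (u : ℕ → G)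
    (hinj : Set.InjOn u (Set.Iio n)) (hmul : ∀ i j, ∃ k ≤ i + j, u i * u j = u k)
    (ha : 0 < a) (hb : 0 < b) (han : a ≤ n) (hbn : b ≤ n) :
    ∃ A B : Finset G, #A = a ∧ #B = b ∧ #(A * B) < a + b := by
  have card_image_range {c : ℕ} (hc : c ≤ n) : #((range c).image u) = c := by
    rw [card_image_of_injOn, card_range]
    exact hinj.mono fun i hi ↦ (mem_range.1 hi).trans_le hc
  refine ⟨_, _, card_image_range han, card_image_range hbn, ?_⟩
  have hsub : (range a).image u * (range b).image u ⊆ (range (a + b - 1)).image u := by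
    simp only [mul_subset_iff, mem_image, mem_range, forall_exists_index, and_imp]
    rintro _ i hi rfl _ j hj rfl
    obtain ⟨k, hk, hijk⟩ := hmul i j
    exact ⟨k, by omega, hijk.symm⟩
  calc #((range a).image u * (range b).image u)
      ≤ #((range (a + b - 1)).image u) := card_le_card hsub
    _ ≤ a + b - 1 := card_image_le.trans_eq (card_range _)
    _ < a + b := by omega

-- Mixed-radix expansion in a product of cyclic groups: the digits of a product are sums of
-- digits reduced modulo the radices, and the reductions only lower the value.
lemma exists_equiv_fin_subadditive (G : Type*) [CommGroup G] [Finite G] :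
    ∃ e : G ≃ Fin (Nat.card G), ∀ x y, (e (x * y) : ℕ) ≤ e x + e y := by
  obtain ⟨ι, _, n, hn, ⟨φ⟩⟩ := CommGroup.equiv_prod_multiplicative_zmod_of_finite G
  have (i : ι) : NeZero (n i) := ⟨by have := hn i; omega⟩
  let σ := (Fintype.equivFin ι).symm
  let digits : (∀ i, Multiplicative (ZMod (n i))) ≃ ∀ j, Fin (n (σ j)) :=
    (Equiv.piCongrRight fun i ↦ Multiplicative.toAdd.trans (ZMod.finEquiv (n i)).symm.toEquiv).trans
      (Equiv.piCongrLeft _ σ).symm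
  have digits_mul_le (x y j) : (digits (x * y) j : ℕ) ≤ digits x j + digits y j := by
    have hadd : digits (x * y) j = digits x j + digits y j :=
      map_add (ZMod.finEquiv (n (σ j))).symm _ _
    rw [hadd, Fin.val_add]
    exact Nat.mod_le _ _
  let e := φ.toEquiv.trans <| digits.trans finPiFinEquiv
  have hcard : ∏ j, n (σ j) = Nat.card G := by simp [Nat.card_congr e]
  refine ⟨e.trans (finCongr hcard), fun x y ↦ ?_⟩
  simp only [e, Equiv.trans_apply, finCongr_apply_coe, finPiFinEquiv_apply,
    ← sum_add_distrib, ← add_mul]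
  refine sum_le_sum fun j _ ↦ Nat.mul_le_mul_right _ ?_
  simpa using digits_mul_le (φ x) (φ y) j

lemma exists_card_mul_lt_of_finite [Finite G] [DecidableEq G] {a b : ℕ} (ha : 0 < a) (hb : 0 < b)
    (haG : a ≤ Nat.card G) (hbG : b ≤ Nat.card G) :
    ∃ A B : Finset G, #A = a ∧ #B = b ∧ #(A * B) < a + b := by
  obtain ⟨e, he⟩ := exists_equiv_fin_subadditive G
  have : NeZero (Nat.card G) := ⟨Nat.card_pos.ne'⟩
  refine exists_card_mul_lt_of_enumeration (fun i ↦ e.symm (Fin.ofNat _ i)) ?_ (fun i j ↦ ?_)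
    ha hb haG hbG
  · intro i hi j hj hij
    simpa [Nat.mod_eq_of_lt (Set.mem_Iio.1 hi), Nat.mod_eq_of_lt (Set.mem_Iio.1 hj)]
      using congrArg Fin.val (e.symm.injective hij)
  · refine ⟨e (e.symm (Fin.ofNat _ i) * e.symm (Fin.ofNat _ j)), (he _ _).trans ?_, ?_⟩
    · simpa using add_le_add (Nat.mod_le i _) (Nat.mod_le j _)
    · simp

lemma exists_card_mul_lt_of_not_isOfFinOrder [DecidableEq G] {g : G} (hg : ¬ IsOfFinOrder g)
    {a b : ℕ} (ha : 0 < a) (hb : 0 < b) :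
    ∃ A B : Finset G, #A = a ∧ #B = b ∧ #(A * B) < a + b :=
  exists_card_mul_lt_of_enumeration (n := max a b) (g ^ ·)
    (injective_pow_iff_not_isOfFinOrder.2 hg).injOn
    (fun i j ↦ ⟨i + j, le_rfl, (pow_add g i j).symm⟩)
    ha hb (le_max_left a b) (le_max_right a b)

lemma exists_card_mul_lt_card_add_card [DecidableEq G] {S T : Finset G} (hS : S.Nonempty)
    (hT : T.Nonempty) :
    ∃ A B : Finset G, #A = #S ∧ #B = #T ∧ #(A * B) < #S + #T := by
  by_cases htors : ∃ g : G, ¬ IsOfFinOrder g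
  · obtain ⟨g, hg⟩ := htors
    exact exists_card_mul_lt_of_not_isOfFinOrder hg hS.card_pos hT.card_pos
  push Not at htors
  let H := Subgroup.closure ((S ∪ T : Finset G) : Set G)
  have : Finite H := CommGroup.finite_of_fg_isMulTorsion H fun x ↦
    Submonoid.isOfFinOrder_coe.1 (htors x)
  have card_le {W : Finset G} (hW : W ⊆ S ∪ T) : #W ≤ Nat.card H := by
    rw [← Set.ncard_coe_finset]
    exact Set.ncard_le_ncard ((coe_subset.2 hW).trans Subgroup.subset_closure)
      (Set.toFinite (H : Set G))
  obtain ⟨A, B, hA, hB, hAB⟩ := exists_card_mul_lt_of_finite hS.card_pos hT.card_pos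
    (card_le subset_union_left) (card_le subset_union_right)
  have card_image (W : Finset H) : #(W.image H.subtype) = #W :=
    card_image_of_injective _ H.subtype_injective
  refine ⟨A.image H.subtype, B.image H.subtype, (card_image A).trans hA,
    (card_image B).trans hB, ?_⟩
  rwa [← image_mul, card_image]

lemma exists_card_mul_le_ceilDiv [DecidableEq G] (H : Subgroup G) [Finite H] {S T : Finset G}
    (hS : S.Nonempty) (hT : T.Nonempty) :
    ∃ A B : Finset G, #A = #S ∧ #B = #T ∧
      #(A * B) ≤ (#S ⌈/⌉ Nat.card H + #T ⌈/⌉ Nat.card H - 1) * Nat.card H := by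
  classical
  have exists_image {W : Finset G} (hW : W.Nonempty) :
      ∃ V : Finset (G ⧸ H), V.Nonempty ∧ #V = #W ⌈/⌉ Nat.card H := by
    obtain ⟨V, -, hV⟩ := exists_subset_card_eq (card_ceilDiv_le_card_image_mk (H := H) W)
    have hWV : #W ≤ Nat.card H * #V := by rw [← ceilDiv_le_iff_le_mul Nat.card_pos, hV]
    exact ⟨V, card_pos.1 (Nat.pos_of_mul_pos_left (hW.card_pos.trans_le hWV)), hV⟩
  obtain ⟨S', hS', hcardS'⟩ := exists_image hS
  obtain ⟨T', hT', hcardT'⟩ := exists_image hT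
  obtain ⟨A', B', hA', hB', hAB'⟩ := exists_card_mul_lt_card_add_card hS' hT'
  have le_card_cosetUnion {W : Finset G} {V : Finset (G ⧸ H)} (hV : #V = #W ⌈/⌉ Nat.card H) :
      #W ≤ #(cosetUnion H V) := by
    rw [card_cosetUnion, ← ceilDiv_le_iff_le_mul Nat.card_pos, hV]
  obtain ⟨A, hAA', hA⟩ := exists_subset_card_eq (le_card_cosetUnion (hA'.trans hcardS'))
  obtain ⟨B, hBB', hB⟩ := exists_subset_card_eq (le_card_cosetUnion (hB'.trans hcardT'))
  refine ⟨A, B, hA, hB, ?_⟩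
  have hsub : A * B ⊆ cosetUnion H (A' * B') := mul_subset_iff.2 fun a ha b hb ↦
    mem_cosetUnion.2 <| mul_mem_mul (mem_cosetUnion.1 (hAA' ha)) (mem_cosetUnion.1 (hBB' hb))
  calc #(A * B) ≤ Nat.card H * #(A' * B') := (card_le_card hsub).trans_eq (card_cosetUnion _)
    _ ≤ Nat.card H * (#S ⌈/⌉ Nat.card H + #T ⌈/⌉ Nat.card H - 1) :=
      Nat.mul_le_mul_left _ (by omega)
    _ = _ := mul_comm _ _

end SmallProductSets

section Kneser

variable {G : Type*} [CommGroup G] {A B C X Y : Finset G} {g x y : G}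
  {H K : Subgroup G} [Finite H] [Finite K]

lemma mul_mem_cosetHull_mul {a b : G} (hx : x ∈ cosetHull H {a}) (hy : y ∈ cosetHull H {b}) :
    x * y ∈ cosetHull H {a * b} := by
  rw [mem_cosetHull_singleton] at *
  rw [mul_inv, mul_mul_mul_comm]
  exact mul_mem hx hy

variable [DecidableEq G]

lemma cosetHull_eq_self_iff_le_stabilizer : cosetHull H C = C ↔ H ≤ stabilizer G C := by
  constructor
  · intro hC h hh
    refine mem_stabilizer_finset'.2 fun c hc ↦ ?_
    rw [← hC]
    exact mem_cosetHull.2 ⟨c, hc, by simpa [mul_comm h]⟩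
  · refine fun hC ↦ Subset.antisymm (fun x hx ↦ ?_) subset_cosetHull
    obtain ⟨c, hc, hcx⟩ := mem_cosetHull.1 hx
    simpa [mul_comm] using mem_stabilizer_finset'.1 (hC hcx) hc

lemma cosetHull_subset (hA : A ⊆ C) (hC : H ≤ stabilizer G C) : cosetHull H A ⊆ C :=
  (cosetHull_mono hA).trans_eq (cosetHull_eq_self_iff_le_stabilizer.2 hC)

lemma cosetHull_mul_cosetHull : cosetHull H A * cosetHull H B = cosetHull H (A * B) := by
  ext x
  constructor
  · intro hx
    obtain ⟨y, hy, z, hz, rfl⟩ := mem_mul.1 hx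
    obtain ⟨a, ha, hay⟩ := mem_cosetHull.1 hy
    obtain ⟨b, hb, hbz⟩ := mem_cosetHull.1 hz
    refine mem_cosetHull.2 ⟨a * b, mul_mem_mul ha hb, ?_⟩
    rw [mul_inv, mul_mul_mul_comm]
    exact mul_mem hay hbz
  · intro hx
    obtain ⟨_, hab, habx⟩ := mem_cosetHull.1 hx
    obtain ⟨a, ha, b, hb, rfl⟩ := mem_mul.1 hab
    refine mem_mul.2 ⟨a, subset_cosetHull ha, a⁻¹ * x, mem_cosetHull.2 ⟨b, hb, ?_⟩, by group⟩
    simpa [mul_assoc] using habx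

lemma le_of_le_stabilizer_of_subset_coset {L : Subgroup G} (hC : C.Nonempty)
    (hCg : C ⊆ cosetHull K {g}) (hL : L ≤ stabilizer G C) : L ≤ K := by
  obtain ⟨x, hx⟩ := hC
  intro l hl
  have hlx : l * x ∈ cosetHull K {x} :=
    cosetHull_singleton_eq (hCg hx) ▸ hCg (mem_stabilizer_finset'.1 (hL hl) hx)
  simpa using mem_cosetHull_singleton.1 hlx

/-- The conclusion of Kneser's theorem for the pair `A`, `B`: `|AH| + |BH| ≤ |AB| + |H|` for some
finite subgroup `H` stabilizing `AB`. -/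
def KneserBound (A B : Finset G) : Prop :=
  ∃ H : Subgroup G, ∃ _ : Finite H, H ≤ stabilizer G (A * B) ∧
    #(cosetHull H A) + #(cosetHull H B) ≤ #(A * B) + Nat.card H

lemma kneserBound_of_card_add_card_le (h : #A + #B ≤ #(A * B) + 1) : KneserBound A B :=
  ⟨⊥, inferInstance, bot_le, by simpa [cosetHull_bot] using h⟩

lemma KneserBound.of_smul_right (h : KneserBound A (g • B)) : KneserBound A B := by
  obtain ⟨H, _, hH, hcard⟩ := h
  rw [mul_smul_comm] at hH hcard
  rw [cosetHull_smul, card_smul_finset, card_smul_finset] at hcard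
  rw [← cosetHull_eq_self_iff_le_stabilizer, cosetHull_smul, smul_left_cancel_iff,
    cosetHull_eq_self_iff_le_stabilizer] at hH
  exact ⟨H, ‹_›, hH, hcard⟩

lemma KneserBound.of_cosetHull (hK : K ≤ stabilizer G (A * B))
    (h : KneserBound (cosetHull K A) (cosetHull K B)) : KneserBound A B := by
  obtain ⟨H, _, hH, hcard⟩ := h
  rw [cosetHull_mul_cosetHull, cosetHull_eq_self_iff_le_stabilizer.2 hK] at hH hcard
  refine ⟨H, ‹_›, hH, le_trans ?_ hcard⟩
  exact add_le_add (card_le_card (cosetHull_mono subset_cosetHull))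
    (card_le_card (cosetHull_mono subset_cosetHull))

lemma kneserBound_of_forall_mul_inv_mem_stabilizer (hA : A.Nonempty) (hB : B.Nonempty)
    (h : ∀ a ∈ A, ∀ a' ∈ A, a' * a⁻¹ ∈ stabilizer G B) : KneserBound A B := by
  obtain ⟨a, ha⟩ := hA
  have : Finite (stabilizer G B) := by
    rw [← stabilizer_coe_finset]
    exact stabilizer_finite hB B.finite_toSet
  have hAa : cosetHull (stabilizer G B) A ⊆ cosetHull (stabilizer G B) {a} := by
    intro x hx
    obtain ⟨a', ha', hax⟩ := mem_cosetHull.1 hx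
    refine mem_cosetHull_singleton.2 ?_
    convert mul_mem (h a ha a' ha') hax using 1
    simp [mul_comm a']
  have hle : stabilizer G B ≤ stabilizer G (A * B) := fun x hx ↦ by
    rw [mem_stabilizer_iff] at hx ⊢
    rw [← mul_smul_comm, hx]
  refine ⟨stabilizer G B, this, hle, ?_⟩
  have hAcard := (card_le_card hAa).trans_eq (card_cosetHull_singleton a)
  have hBcard : #B ≤ #(A * B) := card_le_card_mul_left ⟨a, ha⟩
  rw [cosetHull_eq_self_iff_le_stabilizer.2 le_rfl]
  omega

/-- DeVos's convergents for `A`, `B`: a nonempty `K`-stable set `C ⊆ AB` with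
`|A ∩ B| + |(A ∪ B)K| ≤ |C| + |K|`. -/
structure IsConvergent (A B C : Finset G) (K : Subgroup G) [Finite K] : Prop where
  nonempty : C.Nonempty
  subset_mul : C ⊆ A * B
  le_stabilizer : K ≤ stabilizer G C
  card_le : #(A ∩ B) + #(cosetHull K (A ∪ B)) ≤ #C + Nat.card K

/-- A convergent whose subgroup has the least possible order. -/
structure IsMinimalConvergent (A B C : Finset G) (K : Subgroup G) [Finite K] : Prop
    extends IsConvergent A B C K where
  minimal : ∀ (C' : Finset G) (L : Subgroup G) [Finite L],
    IsConvergent A B C' L → Nat.card K ≤ Nat.card L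

lemma exists_isConvergent (hAB : (A ∩ B).Nonempty) (h : KneserBound (A ∩ B) (A ∪ B)) :
    ∃ C : Finset G, ∃ K : Subgroup G, ∃ _ : Finite K, IsConvergent A B C K := by
  obtain ⟨K, _, hK, hcard⟩ := h
  refine ⟨_, K, ‹_›, hAB.mul (hAB.mono inter_subset_union), inter_mul_union_subset, hK,
    le_trans ?_ hcard⟩
  exact Nat.add_le_add_right (card_le_card subset_cosetHull) _

lemma exists_isMinimalConvergent (hAB : (A ∩ B).Nonempty) (h : KneserBound (A ∩ B) (A ∪ B)) :
    ∃ C : Finset G, ∃ K : Subgroup G, ∃ _ : Finite K, IsMinimalConvergent A B C K := by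
  let orders := {n | ∃ C : Finset G, ∃ K : Subgroup G, ∃ _ : Finite K,
    IsConvergent A B C K ∧ Nat.card K = n}
  have horders : orders.Nonempty :=
    let ⟨C, K, hK, hC⟩ := exists_isConvergent hAB h
    ⟨_, C, K, hK, hC, rfl⟩
  obtain ⟨C, K, hK, hC, hcard⟩ := Nat.sInf_mem horders
  exact ⟨C, K, hK, hC, fun C' L hL hC' ↦ hcard ▸ Nat.sInf_le ⟨C', L, hL, hC', rfl⟩⟩

lemma IsConvergent.kneserBound (h : IsConvergent A B C K) (hK : K ≤ stabilizer G (A * B))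
    (hA : cosetHull K A = A) (hB : cosetHull K B = B) : KneserBound A B := by
  refine ⟨K, ‹_›, hK, ?_⟩
  calc #(cosetHull K A) + #(cosetHull K B) = #(A ∩ B) + #(cosetHull K (A ∪ B)) := by
        rw [cosetHull_union, hA, hB, add_comm #(A ∩ B), card_union_add_card_inter]
    _ ≤ #C + Nat.card K := h.card_le
    _ ≤ #(A * B) + Nat.card K := Nat.add_le_add_right (card_le_card h.subset_mul) _

lemma IsConvergent.disjoint_coset (h : IsConvergent A B C K)
    (hg : ¬ cosetHull K {g} ⊆ A * B) : Disjoint C (cosetHull K {g}) := by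
  refine disjoint_left.2 fun x hxC hxg ↦ hg ?_
  rw [← cosetHull_singleton_eq hxg]
  exact (cosetHull_subset (singleton_subset_iff.2 hxC) h.le_stabilizer).trans h.subset_mul

/-- A pair of nonempty subsets of `A` and `B` whose product lies in the single coset `gK`. -/
structure IsCosetPair (A B : Finset G) (K : Subgroup G) [Finite K] (g : G) (X Y : Finset G) :
    Prop where
  left_nonempty : X.Nonempty
  right_nonempty : Y.Nonempty
  left_subset : X ⊆ A
  right_subset : Y ⊆ B
  mul_subset_coset : X * Y ⊆ cosetHull K {g}

namespace IsCosetPair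

lemma inter_coset {a b : G} (hA : (A ∩ cosetHull K {a}).Nonempty)
    (hB : (B ∩ cosetHull K {b}).Nonempty) :
    IsCosetPair A B K (a * b) (A ∩ cosetHull K {a}) (B ∩ cosetHull K {b}) where
  left_nonempty := hA
  right_nonempty := hB
  left_subset := inter_subset_left
  right_subset := inter_subset_left
  mul_subset_coset := mul_subset_iff.2 fun _ hx _ hy ↦
    mul_mem_cosetHull_mul (mem_inter.1 hx).2 (mem_inter.1 hy).2

lemma card_add_card_mul_le (hXY : IsCosetPair A B K g X Y) (hC : IsConvergent A B C K)
    (hg : ¬ cosetHull K {g} ⊆ A * B) : #C + #(X * Y) ≤ #(A * B) := by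
  rw [← card_union_of_disjoint ((hC.disjoint_coset hg).mono_right hXY.mul_subset_coset)]
  exact card_le_card (union_subset hC.subset_mul (mul_subset_mul hXY.left_subset hXY.right_subset))

lemma card_mul_lt (hXY : IsCosetPair A B K g X Y) (hC : IsConvergent A B C K)
    (hg : ¬ cosetHull K {g} ⊆ A * B) : #(X * Y) < #(A * B) := by
  have := hXY.card_add_card_mul_le hC hg
  have := hC.nonempty.card_pos
  omega

-- Since `K` is minimal, `C ∪ XY` is not a convergent for the subgroup that Kneser's theorem
-- provides for `X` and `Y`.
lemma exists_subgroup (hXY : IsCosetPair A B K g X Y) (hC : IsMinimalConvergent A B C K)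
    (hg : ¬ cosetHull K {g} ⊆ A * B) (h : KneserBound X Y) :
    ∃ L : Subgroup G, ∃ _ : Finite L, L ≤ K ∧
      #(cosetHull L X) + #(cosetHull L Y) ≤ #(X * Y) + Nat.card L ∧
      #C + #(X * Y) + Nat.card L < #(A ∩ B) + #(cosetHull L (A ∪ B)) := by
  obtain ⟨L, _, hL, hcard⟩ := h
  have hne : (X * Y).Nonempty := hXY.left_nonempty.mul hXY.right_nonempty
  have hsub : X * Y ⊆ A * B := mul_subset_mul hXY.left_subset hXY.right_subset
  have hLK : L ≤ K := le_of_le_stabilizer_of_subset_coset hne hXY.mul_subset_coset hL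
  have hlt : Nat.card L < Nat.card K := by
    by_contra! hle
    obtain rfl : L = K := Subgroup.eq_of_le_of_card_ge hLK hle
    obtain ⟨x, hx⟩ := hne
    rw [← cosetHull_singleton_eq (hXY.mul_subset_coset hx)] at hg
    exact hg ((cosetHull_subset (singleton_subset_iff.2 hx) hL).trans hsub)
  have hstab : L ≤ stabilizer G (C ∪ X * Y) := by
    rw [← cosetHull_eq_self_iff_le_stabilizer, cosetHull_union,
      cosetHull_eq_self_iff_le_stabilizer.2 hL,
      cosetHull_eq_self_iff_le_stabilizer.2 (hLK.trans hC.le_stabilizer)]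
  refine ⟨L, ‹_›, hLK, hcard, ?_⟩
  by_contra! hle
  refine hlt.not_ge (hC.minimal (C ∪ X * Y) L
    ⟨hC.nonempty.mono subset_union_left, union_subset hC.subset_mul hsub, hstab, ?_⟩)
  rwa [card_union_of_disjoint
    ((hC.disjoint_coset hg).mono_right hXY.mul_subset_coset)]

lemma not_inter_coset_subset_union (hXY : IsCosetPair A B K g X Y)
    (hC : IsMinimalConvergent A B C K) (hg : ¬ cosetHull K {g} ⊆ A * B) (h : KneserBound X Y)
    (hx : x ∈ A ∪ B) : ¬ (A ∪ B) ∩ cosetHull K {x} ⊆ X ∪ Y := by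
  intro hsub
  obtain ⟨L, _, hLK, hcard, hlt⟩ := hXY.exists_subgroup hC hg h
  have hcoset := card_add_card_cosetHull_le hLK hx
  have hunion : #(cosetHull L ((A ∪ B) ∩ cosetHull K {x})) ≤
      #(cosetHull L X) + #(cosetHull L Y) :=
    (card_le_card (cosetHull_mono hsub)).trans (cosetHull_union (H := L) ▸ card_union_le _ _)
  have := hC.card_le
  omega

lemma card_cosetHull_add_lt (hXY : IsCosetPair A B K g X Y)
    (hC : IsMinimalConvergent A B C K) (hg : ¬ cosetHull K {g} ⊆ A * B) (h : KneserBound X Y)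
    (hcardAB : #(A * B) + 1 < #A + #B) :
    #(cosetHull K (A ∪ B)) + 2 * (#X + #Y) < 2 * Nat.card K + #(A ∪ B) := by
  obtain ⟨L, _, hLK, hcard, hlt⟩ := hXY.exists_subgroup hC hg h
  have hconv := hC.card_le
  have hX : #X ≤ #(cosetHull L X) := card_le_card subset_cosetHull
  have hY : #Y ≤ #(cosetHull L Y) := card_le_card subset_cosetHull
  have hAB : #(cosetHull L (A ∪ B)) ≤ #(cosetHull K (A ∪ B)) :=
    card_le_card (cosetHull_subset_cosetHull_of_le hLK)
  -- `|XL| + |YL| < |K|` are multiples of `|L|`, so they differ by at least `|L|`.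
  have hgap : #(cosetHull L X) + #(cosetHull L Y) + Nat.card L ≤ Nat.card K := by
    have hdvd := Nat.dvd_sub (Subgroup.card_dvd_of_le hLK)
      ((card_dvd_card_cosetHull (H := L) X).add (card_dvd_card_cosetHull Y))
    have := Nat.le_of_dvd (by omega) hdvd
    omega
  have := hXY.card_add_card_mul_le hC.toIsConvergent hg
  have := card_union_add_card_inter A B
  omega

end IsCosetPair

-- Otherwise Kneser's theorem applies to `A ∩ aK`, `B ∩ bK` and to `A ∩ bK`, `B ∩ aK`, and together
-- these two pairs leave too little room for `A ∪ B` in `aK ∪ bK`.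
lemma IsMinimalConvergent.coset_subset_mul (hC : IsMinimalConvergent A B C K)
    (IH : ∀ X Y : Finset G, X.Nonempty → Y.Nonempty → #(X * Y) < #(A * B) → KneserBound X Y)
    (hcard : #(A * B) + 1 < #A + #B) {a b : G} (ha : a ∈ A) (hb : b ∈ B) :
    cosetHull K {a * b} ⊆ A * B := by
  by_contra hg
  have haS : a ∈ A ∪ B := mem_union_left B ha
  have hbS : b ∈ A ∪ B := mem_union_right A hb
  have kneser {X Y} (hXY : IsCosetPair A B K (a * b) X Y) : KneserBound X Y :=
    IH X Y hXY.left_nonempty hXY.right_nonempty (hXY.card_mul_lt hC.toIsConvergent hg)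
  have self_mem_coset (x : G) : x ∈ cosetHull K {x} := subset_cosetHull (mem_singleton_self x)
  have pair_ab : IsCosetPair A B K (a * b) (A ∩ cosetHull K {a}) (B ∩ cosetHull K {b}) :=
    .inter_coset ⟨a, mem_inter.2 ⟨ha, self_mem_coset a⟩⟩ ⟨b, mem_inter.2 ⟨hb, self_mem_coset b⟩⟩
  have not_subset_ab {x : G} (hx : x ∈ A ∪ B) :=
    pair_ab.not_inter_coset_subset_union hC hg (kneser pair_ab) hx
  have hab : cosetHull K {a} ≠ cosetHull K {b} := by
    intro hab
    refine not_subset_ab haS ?_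
    rw [← hab, union_inter_distrib_right]
  have hBa : (B ∩ cosetHull K {a}).Nonempty := by
    by_contra! hempty
    refine not_subset_ab haS ?_
    rw [union_inter_distrib_right, hempty, union_empty]
    exact subset_union_left
  have hAb : (A ∩ cosetHull K {b}).Nonempty := by
    by_contra! hempty
    refine not_subset_ab hbS ?_
    rw [union_inter_distrib_right, hempty, empty_union]
    exact subset_union_right
  have pair_ba : IsCosetPair A B K (a * b) (A ∩ cosetHull K {b}) (B ∩ cosetHull K {a}) :=
    mul_comm b a ▸ .inter_coset hAb hBa
  have hlt_ab := pair_ab.card_cosetHull_add_lt hC hg (kneser pair_ab) hcard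
  have hlt_ba := pair_ba.card_cosetHull_add_lt hC hg (kneser pair_ba) hcard
  have htwo := two_mul_card_add_card_le_card_cosetHull_add haS hbS hab
  rw [union_inter_distrib_right, union_inter_distrib_right] at htwo
  have := card_union_le (A ∩ cosetHull K {a}) (B ∩ cosetHull K {a})
  have := card_union_le (A ∩ cosetHull K {b}) (B ∩ cosetHull K {b})
  omega

lemma IsMinimalConvergent.le_stabilizer_mul (hC : IsMinimalConvergent A B C K)
    (IH : ∀ X Y : Finset G, X.Nonempty → Y.Nonempty → #(X * Y) < #(A * B) → KneserBound X Y)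
    (hcard : #(A * B) + 1 < #A + #B) : K ≤ stabilizer G (A * B) := by
  refine cosetHull_eq_self_iff_le_stabilizer.1 (Subset.antisymm (fun x hx ↦ ?_) subset_cosetHull)
  obtain ⟨_, hab, habx⟩ := mem_cosetHull.1 hx
  obtain ⟨a, ha, b, hb, rfl⟩ := mem_mul.1 hab
  exact hC.coset_subset_mul IH hcard ha hb (mem_cosetHull_singleton.2 habx)

/-- The quantity on which Kneser's theorem is proved by induction: small `|AB|` first, then large
`|A| + |B|`, then small `|A|`. The subtraction does not truncate when `A` and `B` are nonempty. -/
def complexity (A B : Finset G) : ℕ ×ₗ ℕ ×ₗ ℕ :=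
  toLex (#(A * B), toLex (2 * #(A * B) - (#A + #B), #A))

lemma complexity_lt_of_card_mul_lt {A' B' : Finset G} (h : #(A' * B') < #(A * B)) :
    complexity A' B' < complexity A B :=
  Prod.Lex.toLex_lt_toLex.2 (.inl h)

lemma complexity_lt_of_card_add_lt {A' B' : Finset G} (hA' : A'.Nonempty) (hB' : B'.Nonempty)
    (hmul : #(A' * B') ≤ #(A * B)) (hadd : #A + #B < #A' + #B') :
    complexity A' B' < complexity A B := by
  have := card_le_card_mul_right (s := A') hB'
  have := card_le_card_mul_left (t := B') hA'
  simp only [complexity, Prod.Lex.toLex_lt_toLex]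
  omega

lemma complexity_lt_of_card_left_lt {A' B' : Finset G} (hmul : #(A' * B') ≤ #(A * B))
    (hadd : #A' + #B' = #A + #B) (hleft : #A' < #A) : complexity A' B' < complexity A B := by
  simp only [complexity, Prod.Lex.toLex_lt_toLex]
  omega

lemma complexity_smul_right : complexity A (g • B) = complexity A B := by
  simp only [complexity, mul_smul_comm, card_smul_finset]

lemma complexity_inter_union_lt (hAB : ¬ A ⊆ B) :
    complexity (A ∩ B) (A ∪ B) < complexity A B :=
  complexity_lt_of_card_left_lt (card_le_card inter_mul_union_subset)
    (card_inter_add_card_union A B)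
    (card_lt_card <| inter_subset_left.ssubset_of_not_subset fun h ↦
      hAB (h.trans inter_subset_right))

lemma complexity_cosetHull_lt (hA : A.Nonempty) (hB : B.Nonempty)
    (hK : K ≤ stabilizer G (A * B)) (hne : ¬ (cosetHull K A = A ∧ cosetHull K B = B)) :
    complexity (cosetHull K A) (cosetHull K B) < complexity A B := by
  have hAle : #A ≤ #(cosetHull K A) := card_le_card subset_cosetHull
  have hBle : #B ≤ #(cosetHull K B) := card_le_card subset_cosetHull
  refine complexity_lt_of_card_add_lt (hA.mono subset_cosetHull) (hB.mono subset_cosetHull) ?_ ?_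
  · rw [cosetHull_mul_cosetHull, cosetHull_eq_self_iff_le_stabilizer.2 hK]
  · by_contra! hle
    exact hne ⟨(eq_of_subset_of_card_le subset_cosetHull (by omega)).symm,
      (eq_of_subset_of_card_le subset_cosetHull (by omega)).symm⟩

lemma kneserBound_of_forall_complexity_lt
    (IH : ∀ A' B' : Finset G, A'.Nonempty → B'.Nonempty → complexity A' B' < complexity A B →
      KneserBound A' B')
    (hAB : (A ∩ B).Nonempty) (hsub : ¬ A ⊆ B) : KneserBound A B := by
  by_cases! hcard : #A + #B ≤ #(A * B) + 1
  · exact kneserBound_of_card_add_card_le hcard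
  have hA : A.Nonempty := hAB.mono inter_subset_left
  have hB : B.Nonempty := hAB.mono inter_subset_right
  obtain ⟨C, K, _, hC⟩ := exists_isMinimalConvergent hAB
    (IH _ _ hAB (hAB.mono inter_subset_union) (complexity_inter_union_lt hsub))
  have hK : K ≤ stabilizer G (A * B) := hC.le_stabilizer_mul
    (fun X Y hX hY hlt ↦ IH X Y hX hY (complexity_lt_of_card_mul_lt hlt)) hcard
  by_cases hstable : cosetHull K A = A ∧ cosetHull K B = B
  · exact hC.kneserBound hK hstable.1 hstable.2
  · exact .of_cosetHull hK (IH _ _ (hA.mono subset_cosetHull) (hB.mono subset_cosetHull)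
      (complexity_cosetHull_lt hA hB hK hstable))

theorem kneserBound (A B : Finset G) (hA : A.Nonempty) (hB : B.Nonempty) : KneserBound A B := by
  induction hc : complexity A B using WellFoundedLT.induction generalizing A B with | ind c IH
  by_cases! h : ∃ a ∈ A, ∃ b ∈ B, ¬ A ⊆ (a * b⁻¹) • B
  · obtain ⟨a, ha, b, hb, hsub⟩ := h
    have hinter : (A ∩ (a * b⁻¹) • B).Nonempty :=
      ⟨a, mem_inter.2 ⟨ha, by simpa using smul_mem_smul_finset (a := a * b⁻¹) hb⟩⟩
    refine .of_smul_right (kneserBound_of_forall_complexity_lt (fun A' B' hA' hB' hlt ↦ ?_)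
      hinter hsub)
    rw [complexity_smul_right, hc] at hlt
    exact IH _ hlt A' B' hA' hB' rfl
  · refine kneserBound_of_forall_mul_inv_mem_stabilizer hA hB fun a ha a' ha' ↦ ?_
    refine mem_stabilizer_finset'.2 fun b hb ↦ ?_
    have hB : (a * b⁻¹)⁻¹ • a' ∈ B := inv_smul_mem_iff.2 (h a ha b hb ha')
    convert hB using 1
    simp [mul_comm, mul_left_comm]

lemma exists_subgroup_ceilDiv_le_card_mul (hA : A.Nonempty) (hB : B.Nonempty) :
    ∃ H : Subgroup G, ∃ _ : Finite H,
      (#A ⌈/⌉ Nat.card H + #B ⌈/⌉ Nat.card H - 1) * Nat.card H ≤ #(A * B) := by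
  classical
  obtain ⟨H, _, -, hcard⟩ := kneserBound A B hA hB
  refine ⟨H, ‹_›, ?_⟩
  rw [card_cosetHull, card_cosetHull, ← mul_add] at hcard
  calc (#A ⌈/⌉ Nat.card H + #B ⌈/⌉ Nat.card H - 1) * Nat.card H
      ≤ (#(A.image ((↑) : G → G ⧸ H)) + #(B.image ((↑) : G → G ⧸ H)) - 1) * Nat.card H := by
        gcongr <;> exact card_ceilDiv_le_card_image_mk _
    _ ≤ #(A * B) := by
        rw [Nat.sub_mul, one_mul, mul_comm]
        exact Nat.sub_le_iff_le_add.2 hcard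

end Kneser

end

/-- **Theorem 2.1** (Eliahou–Kervaire): for an abelian group `G` and positive integers
`r, s` not exceeding `|G|`, the minimum of `|AB|` over subsets `A, B ⊆ G` with `|A| = r`,
`|B| = s` equals `κ_G(r,s) = min_h (⌈r/h⌉ + ⌈s/h⌉ - 1)·h`, the minimum being over the
cardinalities `h` of finite subgroups of `G`. -/
theorem stmt_4 (G : Type*) [CommGroup G] [DecidableEq G]
    (r s : ℕ) (hr : 0 < r) (hs : 0 < s)
    (hrG : (r : Cardinal) ≤ Cardinal.mk G) (hsG : (s : Cardinal) ≤ Cardinal.mk G) :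
    sInf {n : ℕ | ∃ A B : Finset G, A.card = r ∧ B.card = s ∧ (A * B).card = n}
      = sInf {n : ℕ | ∃ H : Subgroup G, ∃ _ : Finite H,
          n = (r ⌈/⌉ Nat.card H + s ⌈/⌉ Nat.card H - 1) * Nat.card H} := by
  obtain ⟨S, rfl⟩ := Cardinal.exists_finset_eq_card hrG
  obtain ⟨T, rfl⟩ := Cardinal.exists_finset_eq_card hsG
  apply le_antisymm
  · refine le_csInf ⟨_, ⊥, inferInstance, rfl⟩ ?_
    rintro _ ⟨H, _, rfl⟩
    obtain ⟨A, B, hA, hB, hAB⟩ := exists_card_mul_le_ceilDiv H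
      (Finset.card_pos.1 hr) (Finset.card_pos.1 hs)
    exact csInf_le_of_le (OrderBot.bddBelow _) ⟨A, B, hA, hB, rfl⟩ hAB
  · refine le_csInf ⟨_, S, T, rfl, rfl, rfl⟩ ?_
    rintro _ ⟨A, B, hA, hB, rfl⟩
    obtain ⟨H, hH, hAB⟩ := exists_subgroup_ceilDiv_le_card_mul (A := A) (B := B)
      (Finset.card_pos.1 (hA ▸ hr)) (Finset.card_pos.1 (hB ▸ hs))
    rw [hA, hB] at hAB
    exact csInf_le_of_le (OrderBot.bddBelow _) ⟨H, hH, rfl⟩ hAB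
end
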